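/- For each integer k ≥ 1 the following holds as a polynomial identity in w₁,…,w_{2k−1}, x, y, u, v and ζ: (x−y)·h(u,v)·H_{2(k+1)}(w₁,…,w_{2k−1},x,y,v)·H_{2k}(w₁,…,w_{2k−1},u) + (y−u)·h(x,v)·H_{2(k+1)}(w₁,…,w_{2k−1},y,u,v)·H_{2k}(w₁,…,w_{2k−1},x) + (u−x)·h(y,v)·H_{2(k+1)}(w₁,…,w_{2k−1},u,x,v)·H_{2k}(w₁,…,w_{2k−1},y) = 0. -/

import Mathlib

noncomputable section

open Complex
open scoped BigOperators

/-- Jacobi theta function `ϑ₁(z|τ)` with nome `p = e^{iπτ}` (Whittaker–Watson convention). -/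
def th1 (z τ : ℂ) : ℂ :=
  -Complex.I * ∑' n : ℤ, (-1 : ℂ) ^ n *
    Complex.exp ((Real.pi : ℂ) * Complex.I * τ * ((n : ℂ) + 1/2) ^ 2 + (2 * (n : ℂ) + 1) * Complex.I * z)

/-- Jacobi theta function `ϑ₂(z|τ)`. -/
def th2 (z τ : ℂ) : ℂ :=
  ∑' n : ℤ,
    Complex.exp ((Real.pi : ℂ) * Complex.I * τ * ((n : ℂ) + 1/2) ^ 2 + (2 * (n : ℂ) + 1) * Complex.I * z)

/-- Jacobi theta function `ϑ₃(z|τ)`. -/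
def th3 (z τ : ℂ) : ℂ :=
  ∑' n : ℤ, Complex.exp ((Real.pi : ℂ) * Complex.I * τ * (n : ℂ) ^ 2 + 2 * (n : ℂ) * Complex.I * z)

/-- Jacobi theta function `ϑ₄(z|τ)`. -/
def th4 (z τ : ℂ) : ℂ :=
  ∑' n : ℤ, (-1 : ℂ) ^ n *
    Complex.exp ((Real.pi : ℂ) * Complex.I * τ * (n : ℂ) ^ 2 + 2 * (n : ℂ) * Complex.I * z)

/-- The crossing parameter `η = π/3`. -/
def ηc : ℂ := (Real.pi : ℂ) / 3

/-- The elliptic nome `p = e^{iπτ}`. -/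
def pnome (τ : ℂ) : ℂ := Complex.exp ((Real.pi : ℂ) * Complex.I * τ)

/-- `ζ = (ϑ₁(η,p²)/ϑ₄(η,p²))²`. -/
def zet (τ : ℂ) : ℂ := (th1 ηc (2 * τ) / th4 ηc (2 * τ)) ^ 2

/-- The nome `p` is real with `0 < p < 1`. -/
def preal (τ : ℂ) : Prop := (pnome τ).im = 0 ∧ 0 < (pnome τ).re ∧ (pnome τ).re < 1

/-- A tuple given by a list of prescribed entries, padded by zeros. -/
def padded {n : ℕ} (l : List ℂ) : Fin n → ℂ := fun j => l.getD (j : ℕ) 0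

/-- Extension of a tuple by a list of prescribed further entries (padded by zeros). -/
def extL {m n : ℕ} (w : Fin m → ℂ) (l : List ℂ) : Fin n → ℂ :=
  fun j => if h : (j : ℕ) < m then w ⟨j, h⟩ else l.getD ((j : ℕ) - m) 0

/-- First `k` entries of a `2k`-tuple. -/
def firstHalf {k : ℕ} (x : Fin (2 * k) → ℂ) : Fin k → ℂ :=
  fun i => x ⟨(i : ℕ), by have := i.2; omega⟩

/-- Last `k` entries of a `2k`-tuple. -/
def secondHalf {k : ℕ} (x : Fin (2 * k) → ℂ) : Fin k → ℂ :=
  fun i => x ⟨k + (i : ℕ), by have := i.2; omega⟩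

/-- `𝕙(x,y) = ϑ₁(x−y+η)ϑ₁(x−y−η)ϑ₁(x+y+η)ϑ₁(x+y−η)`. -/
def hh (τ x y : ℂ) : ℂ :=
  th1 (x - y + ηc) τ * th1 (x - y - ηc) τ * th1 (x + y + ηc) τ * th1 (x + y - ηc) τ

/-- `𝔻(x₁,…,x_k) = ∏_{i<j} ϑ₁(x_j−x_i)ϑ₁(x_j+x_i)`. -/
def vdTheta (τ : ℂ) {k : ℕ} (y : Fin k → ℂ) : ℂ :=
  ∏ i : Fin k, ∏ j : Fin k, if i < j then th1 (y j - y i) τ * th1 (y j + y i) τ else 1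

/-- The elliptic Tsuchiya determinant `ℍ_{2k}(x₁,…,x_k; x_{k+1},…,x_{2k})`. -/
def tsuchiya (τ : ℂ) (k : ℕ) (x : Fin (2 * k) → ℂ) : ℂ :=
  (∏ i : Fin k, ∏ j : Fin k, hh τ (firstHalf x i) (secondHalf x j))
    / (vdTheta τ (firstHalf x) * vdTheta τ (secondHalf x))
    * Matrix.det (Matrix.of fun i j : Fin k => (hh τ (firstHalf x i) (secondHalf x j))⁻¹)

/-- The expression defining the elliptic Tsuchiya determinant is well defined:
the Vandermonde-type denominators and the entries `𝕙(x_i,x_{j+k})` are nonzero. -/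
def tsuDefined (τ : ℂ) (k : ℕ) (x : Fin (2 * k) → ℂ) : Prop :=
  (∀ i j : Fin k, i ≠ j →
    th1 (firstHalf x j - firstHalf x i) τ ≠ 0 ∧ th1 (firstHalf x j + firstHalf x i) τ ≠ 0) ∧
  (∀ i j : Fin k, i ≠ j →
    th1 (secondHalf x j - secondHalf x i) τ ≠ 0 ∧ th1 (secondHalf x j + secondHalf x i) τ ≠ 0) ∧
  (∀ i j : Fin k, hh τ (firstHalf x i) (secondHalf x j) ≠ 0)

/-- `h(w,w') = 1 − (3+ζ²)ww' + (1−ζ²)ww'(w+w')`. -/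
def hpol (ζ w w' : ℂ) : ℂ := 1 - (3 + ζ ^ 2) * w * w' + (1 - ζ ^ 2) * w * w' * (w + w')

/-- Vandermonde product `Δ(w₁,…,w_k) = ∏_{i<j}(w_j − w_i)`. -/
def vdm {k : ℕ} (y : Fin k → ℂ) : ℂ :=
  ∏ i : Fin k, ∏ j : Fin k, if i < j then y j - y i else 1

/-- The determinant-ratio expression defining the polynomial `H_{2k}`. -/
def Hratio (ζ : ℂ) (k : ℕ) (w : Fin (2 * k) → ℂ) : ℂ :=
  (∏ i : Fin k, ∏ j : Fin k, hpol ζ (firstHalf w i) (secondHalf w j))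
    / (vdm (firstHalf w) * vdm (secondHalf w))
    * Matrix.det (Matrix.of fun i j : Fin k => (hpol ζ (firstHalf w i) (secondHalf w j))⁻¹)

/-- The expression `Hratio` is well defined at `w`. -/
def HratioDefined (ζ : ℂ) (k : ℕ) (w : Fin (2 * k) → ℂ) : Prop :=
  (∀ i j : Fin k, i ≠ j → firstHalf w i ≠ firstHalf w j) ∧
  (∀ i j : Fin k, i ≠ j → secondHalf w i ≠ secondHalf w j) ∧
  (∀ i j : Fin k, hpol ζ (firstHalf w i) (secondHalf w j) ≠ 0)

/-- `H` is the family of Rosengren–Zinn-Justin polynomials `H_{2k}` for parameter `ζ`: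
for each `k`, `H k` is a polynomial function of the `2k` variables agreeing with the
determinant-ratio formula wherever the latter is defined, and `H 0 = 1`. -/
def IsHFamily (ζ : ℂ) (H : (k : ℕ) → (Fin (2 * k) → ℂ) → ℂ) : Prop :=
  (∀ w, H 0 w = 1) ∧
  (∀ k : ℕ, ∃ P : MvPolynomial (Fin (2 * k)) ℂ, ∀ w, H k w = MvPolynomial.eval w P) ∧
  (∀ (k : ℕ) (w : Fin (2 * k) → ℂ), HratioDefined ζ k w → H k w = Hratio ζ k w)

/-- Vertex weight `a(u)`. -/
def av (τ u : ℂ) : ℂ := th4 (2*ηc) (2*τ) * th1 (u + 2*ηc) (2*τ) * th4 u (2*τ)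
/-- Vertex weight `b(u)`. -/
def bv (τ u : ℂ) : ℂ := th4 (2*ηc) (2*τ) * th4 (u + 2*ηc) (2*τ) * th1 u (2*τ)
/-- Vertex weight `c(u)`. -/
def cv (τ u : ℂ) : ℂ := th1 (2*ηc) (2*τ) * th4 (u + 2*ηc) (2*τ) * th4 u (2*τ)
/-- Vertex weight `d(u)`. -/
def dv (τ u : ℂ) : ℂ := th1 (2*ηc) (2*τ) * th1 (u + 2*ηc) (2*τ) * th1 u (2*τ)
/-- `r(u) = a(u) + b(u)`. -/
def rv (τ u : ℂ) : ℂ := av τ u + bv τ u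

/-- Entries of the `R`-matrix of the eight-vertex model, in the basis `{↑↑,↑↓,↓↑,↓↓}`
identified with `Fin 2 × Fin 2` (`↑ = 0`, `↓ = 1`). -/
def Rent (τ u : ℂ) (p q : Fin 2 × Fin 2) : ℂ :=
  if p = q then (if p.1 = p.2 then av τ u else bv τ u)
  else if q = (p.2, p.1) then cv τ u
  else if p.1 = p.2 ∧ q.1 = q.2 then dv τ u
  else 0

/-- Entries of `Ř(u) = 𝒫 R(u)`. -/
def Rcheckent (τ u : ℂ) (p q : Fin 2 × Fin 2) : ℂ := Rent τ u (p.2, p.1) q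

/-- The boundary vector `χ(x) ∈ ℂ²⊗ℂ²`. -/
def chiV (τ lam x : ℂ) : Fin 2 × Fin 2 → ℂ := fun p =>
  if p = ((0 : Fin 2), (1 : Fin 2)) then th1 (x + lam) (2*τ) * th4 (x - lam - 2*ηc) (2*τ)
  else if p = ((1 : Fin 2), (0 : Fin 2)) then th1 (x - lam - 2*ηc) (2*τ) * th4 (x + lam) (2*τ)
  else 0

/-- The boundary vector `χ̄(x) ∈ ℂ²⊗ℂ²`. -/
def chibarV (τ lam x : ℂ) : Fin 2 × Fin 2 → ℂ := fun p =>
  if p = ((0 : Fin 2), (0 : Fin 2)) then th1 (x + lam) (2*τ) * th1 (x - lam - 2*ηc) (2*τ)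
  else if p = ((1 : Fin 2), (1 : Fin 2)) then th4 (x - lam - 2*ηc) (2*τ) * th4 (x + lam) (2*τ)
  else 0

/-- A family `Ψ_n(u₁,…,u_{2n+1}) ∈ (ℂ²)^{⊗(2n+1)}`, represented by its components
with respect to spin configurations `α : Fin (2n+1) → Fin 2` (`↑ = 0`, `↓ = 1`). -/
abbrev PsiFam := (n : ℕ) → (Fin (2 * n + 1) → ℂ) → (Fin (2 * n + 1) → Fin 2) → ℂ

/-- The action of `Ř(u)` on tensor factors `i`, `j` of `(ℂ²)^{⊗L}`. -/
def applyRc (τ u : ℂ) {L : ℕ} (i j : Fin L) (ψ : (Fin L → Fin 2) → ℂ) :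
    (Fin L → Fin 2) → ℂ := fun α =>
  ∑ s : Fin 2, ∑ t : Fin 2,
    Rcheckent τ u (α i, α j) (s, t) * ψ (Function.update (Function.update α i s) j t)

/-- Spin flip. -/
def flipS : Fin 2 → Fin 2 := fun s => if s = 0 then 1 else 0

/-- Components of the singlet `s = ↑↓ − ↓↑`. -/
def singletC : Fin 2 → Fin 2 → ℂ := fun s t =>
  if s = 0 ∧ t = 1 then 1 else if s = 1 ∧ t = 0 then -1 else 0

/-- Delete the entries at positions `i`, `i+1` from a tuple. -/
def delTwo {α : Type*} {n : ℕ} (i : ℕ) (u : Fin (2 * (n + 1) + 1) → α) : Fin (2 * n + 1) → α :=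
  fun j => if _h : (j : ℕ) < i then u ⟨j, by have := j.2; omega⟩
           else u ⟨(j : ℕ) + 2, by have := j.2; omega⟩

/-- The components of `Ψ_n` are entire functions of each `u_i`. -/
def PsiEntire (Ψ : PsiFam) : Prop :=
  ∀ (n : ℕ) (u : Fin (2*n+1) → ℂ) (i : Fin (2*n+1)) (α : Fin (2*n+1) → Fin 2),
    Differentiable ℂ fun z => Ψ n (Function.update u i z) α

/-- (P1): the exchange relations. -/
def PsiP1 (τ : ℂ) (Ψ : PsiFam) : Prop :=
  ∀ (n : ℕ) (u : Fin (2*n+1) → ℂ) (i j : Fin (2*n+1)), (j : ℕ) = (i : ℕ) + 1 →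
    applyRc τ (u j - u i) i j (Ψ n u)
      = fun α => rv τ (u j - u i) * Ψ n (fun l => u (Equiv.swap i j l)) α

/-- (P2): local spin flips. -/
def PsiP2 (τ : ℂ) (Ψ : PsiFam) : Prop :=
  ∀ (n : ℕ) (u : Fin (2*n+1) → ℂ) (i : Fin (2*n+1)) (α : Fin (2*n+1) → Fin 2),
    Ψ n u (Function.update α i (flipS (α i)))
      = (-(pnome τ)) ^ n * Complex.exp (-Complex.I * ∑ j, (u j - u i))
        * Ψ n (Function.update u i (u i + Real.pi * τ)) α

/-- (P3): quasi-periodicity of `Ψ_n` in each `u_i`. -/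
def PsiP3 (τ : ℂ) (Ψ : PsiFam) : Prop :=
  ∀ (n : ℕ) (u : Fin (2*n+1) → ℂ) (i : Fin (2*n+1)),
    (Ψ n (Function.update u i (u i + Real.pi))
      = fun α => (∏ j ∈ Finset.univ.erase i, (if α j = 0 then (1:ℂ) else -1)) * Ψ n u α) ∧
    (Ψ n (Function.update u i (u i + 2 * Real.pi * τ))
      = fun α => (pnome τ ^ (4*n))⁻¹ *
          Complex.exp (-2 * Complex.I * ∑ j, (u i - u j)) * Ψ n u α)

/-- (P4): the wheel condition. -/
def PsiP4 (Ψ : PsiFam) : Prop :=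
  ∀ (n : ℕ) (u : Fin (2*n+1) → ℂ),
    (∃ i j k : Fin (2*n+1), i < j ∧ j < k ∧ u j = u i + 2*ηc ∧ u k = u i + 4*ηc) →
    Ψ n u = 0

/-- (P5): the reduction relations. -/
def PsiP5 (τ : ℂ) (Ψ : PsiFam) : Prop :=
  ∀ (n : ℕ) (u : Fin (2*(n+1)+1) → ℂ) (i : ℕ) (hi : i + 1 < 2*(n+1)+1),
    u ⟨i+1, hi⟩ = u ⟨i, by omega⟩ + 2*ηc →
    Ψ (n+1) u = fun α =>
      (∏ j ∈ (Finset.univ.erase (⟨i, by omega⟩ : Fin (2*(n+1)+1))).erase ⟨i+1, hi⟩,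
          th1 (u ⟨i, by omega⟩ - u j - 2*ηc) τ)
        * singletC (α ⟨i, by omega⟩) (α ⟨i+1, hi⟩)
        * Ψ n (delTwo i u) (delTwo i α)

/-- (P6): `Ψ₀ = ↑ + ↓`. -/
def PsiP6 (Ψ : PsiFam) : Prop := ∀ u α, Ψ 0 u α = 1

/-- The inhomogeneity parameters `(x₁,−x₁,…,x_n,−x_n,0)`. -/
def interleave {n : ℕ} (x : Fin n → ℂ) : Fin (2*n+1) → ℂ := fun j =>
  if h : (j : ℕ) < 2*n then
    (if (j : ℕ) % 2 = 0 then x ⟨(j:ℕ)/2, by omega⟩ else -x ⟨(j:ℕ)/2, by omega⟩)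
  else 0

/-- Components of `χ(x)`. -/
def chiC (τ lam x : ℂ) (s t : Fin 2) : ℂ :=
  if s = 0 ∧ t = 1 then th1 (x + lam) (2*τ) * th4 (x - lam - 2*ηc) (2*τ)
  else if s = 1 ∧ t = 0 then th1 (x - lam - 2*ηc) (2*τ) * th4 (x + lam) (2*τ)
  else 0

/-- Components of `χ̄(x)`. -/
def chibarC (τ lam x : ℂ) (s t : Fin 2) : ℂ :=
  if s = 0 ∧ t = 0 then th1 (x + lam) (2*τ) * th1 (x - lam - 2*ηc) (2*τ)
  else if s = 1 ∧ t = 1 then th4 (x - lam - 2*ηc) (2*τ) * th4 (x + lam) (2*τ)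
  else 0

/-- The scalar product `Z_n(x₁,…,x_n) = ⟨ξ_n(x₁,…,x_n), Ψ_n(x₁,−x₁,…,x_n,−x_n,0)⟩`. -/
def Zfun (τ lam : ℂ) (Ψ : PsiFam) (n : ℕ) (x : Fin n → ℂ) : ℂ :=
  ∑ α : Fin (2*n+1) → Fin 2,
    (∏ m : Fin n, chiC τ lam (x m)
        (α ⟨2*(m:ℕ), by have := m.2; omega⟩) (α ⟨2*(m:ℕ)+1, by have := m.2; omega⟩))
      * (if α ⟨2*n, by omega⟩ = 0 then (1:ℂ) else 0)
      * Ψ n (interleave x) α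

/-- The scalar product `Z̄_n^±(x₁,…,x_n)`, with `ε = ±1`. -/
def Zbarfun (τ lam ε : ℂ) (Ψ : PsiFam) (n : ℕ) (x : Fin n → ℂ) : ℂ :=
  ∑ α : Fin (2*n+1) → Fin 2,
    (∏ m : Fin n, chibarC τ lam (x m)
        (α ⟨2*(m:ℕ), by have := m.2; omega⟩) (α ⟨2*(m:ℕ)+1, by have := m.2; omega⟩))
      * (if α ⟨2*n, by omega⟩ = 0 then (1:ℂ) else ε)
      * Ψ n (interleave x) α

/-- The normalisation constant `𝒩_n`. -/
def Ncoef (τ : ℂ) (n : ℕ) : ℂ :=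
  (-1 : ℂ) ^ ((n+1)/2) * (th1 ηc τ ^ (n^2))⁻¹ * (th4 0 (2*τ) / th4 ηc (2*τ)) ^ (n*(n+1)/2)

/-- The vector `ψ_n = 𝒩_n Ψ_n(0,…,0)`. -/
def psiH (τ : ℂ) (Ψ : PsiFam) (n : ℕ) (α : Fin (2*n+1) → Fin 2) : ℂ :=
  Ncoef τ n * Ψ n (fun _ => 0) α

/-- The scalar product `S_n(μ) = ((⟨↑↓| + μ⟨↓↑|)^{⊗n} ⊗ ⟨↑|) ψ_n`. -/
def Sfun (τ : ℂ) (Ψ : PsiFam) (n : ℕ) (μ : ℂ) : ℂ :=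
  ∑ α : Fin (2*n+1) → Fin 2,
    (∏ m : Fin n,
      (if α ⟨2*(m:ℕ), by have := m.2; omega⟩ = 0 ∧ α ⟨2*(m:ℕ)+1, by have := m.2; omega⟩ = 1
        then (1:ℂ)
       else if α ⟨2*(m:ℕ), by have := m.2; omega⟩ = 1 ∧ α ⟨2*(m:ℕ)+1, by have := m.2; omega⟩ = 0
        then μ
       else 0))
      * (if α ⟨2*n, by omega⟩ = 0 then (1:ℂ) else 0) * psiH τ Ψ n α

/-- The scalar product `S̄_n^±(ν) = ((⟨↑↑| + ν⟨↓↓|)^{⊗n} ⊗ (⟨↑| ± ⟨↓|)) ψ_n`, with `ε = ±1`. -/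
def Sbarfun (τ ε : ℂ) (Ψ : PsiFam) (n : ℕ) (ν : ℂ) : ℂ :=
  ∑ α : Fin (2*n+1) → Fin 2,
    (∏ m : Fin n,
      (if α ⟨2*(m:ℕ), by have := m.2; omega⟩ = 0 ∧ α ⟨2*(m:ℕ)+1, by have := m.2; omega⟩ = 0
        then (1:ℂ)
       else if α ⟨2*(m:ℕ), by have := m.2; omega⟩ = 1 ∧ α ⟨2*(m:ℕ)+1, by have := m.2; omega⟩ = 1
        then ν
       else 0))
      * (if α ⟨2*n, by omega⟩ = 0 then (1:ℂ) else ε) * psiH τ Ψ n α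

/-- The alternating spin configuration `↑↓↑↓⋯↑`. -/
def altConf {L : ℕ} : Fin L → Fin 2 := fun j => if (j : ℕ) % 2 = 0 then 0 else 1

/-- The fully polarised spin configuration `↓⋯↓`. -/
def downConf {L : ℕ} : Fin L → Fin 2 := fun _ => 1

/-- The spin configuration `↑⋯↑↓` with a single `↓` at the last site. -/
def lastDownConf {n : ℕ} : Fin (2*n+1) → Fin 2 := fun j => if (j : ℕ) = 2*n then 1 else 0

/-- `J₂ = −1/2`. -/
def J2c : ℂ := -(1/2)
/-- `J₃ = 1/(1+ζ)`. -/
def J3c (ζ : ℂ) : ℂ := 1/(1+ζ)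
/-- `J₄ = 1/(1−ζ)`. -/
def J4c (ζ : ℂ) : ℂ := 1/(1-ζ)
/-- `μ̄ = (μ−1)²/((ζ²−1)μ)`. -/
def mubar (ζ μ : ℂ) : ℂ := (μ - 1)^2 / ((ζ^2 - 1)*μ)
/-- `ν̄ = (ν−ζ)(νζ−1)/((ζ²−1)ν)`. -/
def nubar (ζ ν : ℂ) : ℂ := (ν - ζ)*(ν*ζ - 1) / ((ζ^2 - 1)*ν)

/-- The elliptic function `w(x)`. -/
def wfun (τ x : ℂ) : ℂ :=
  th4 ηc (2*τ) / th4 0 (2*τ) * th1 x τ ^ 2 / (th1 (x - ηc) τ * th1 (x + ηc) τ)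

/-- `β₂ = η + π/2`. -/
def β2c : ℂ := ηc + (Real.pi : ℂ)/2
/-- `β₃ = η + π/2 + πτ/2`. -/
def β3c (τ : ℂ) : ℂ := ηc + (Real.pi : ℂ)/2 + (Real.pi : ℂ)*τ/2
/-- `β₄ = η + πτ/2`. -/
def β4c (τ : ℂ) : ℂ := ηc + (Real.pi : ℂ)*τ/2

/-- `f` is an (even) theta function of degree `m`, nome `p = e^{iπτ}` and norm `0`
with respect to each of its variables. -/
def ThetaLike (τ : ℂ) (m : ℕ) {n : ℕ} (X : (Fin n → ℂ) → ℂ) : Prop :=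
  ∀ (x : Fin n → ℂ) (i : Fin n),
    Differentiable ℂ (fun z => X (Function.update x i z)) ∧
    (∀ z, X (Function.update x i (z + Real.pi)) = X (Function.update x i z)) ∧
    (∀ z, X (Function.update x i (z + Real.pi * τ))
        = ((-(pnome τ)) ^ m)⁻¹ * Complex.exp (-2 * Complex.I * ((m : ℂ) * z))
            * X (Function.update x i z)) ∧
    (∀ z, X (Function.update x i (-z)) = X (Function.update x i z))

section Determinants

/-- The determinant whose first two columns are `x` and `y`, followed by the columns of `B`. -/
def pairDet {m : ℕ} (B : Fin (m + 2) → Fin m → ℂ) (x y : Fin (m + 2) → ℂ) : ℂ :=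
  Matrix.det (Matrix.of fun i : Fin (m + 2) =>
    (Fin.cons (x i) (Fin.cons (y i) (B i) : Fin (m + 1) → ℂ) : Fin (m + 2) → ℂ))

theorem pairDet_self {m : ℕ} (B : Fin (m + 2) → Fin m → ℂ) (x : Fin (m + 2) → ℂ) :
    pairDet B x x = 0 :=
  Matrix.det_zero_of_column_eq (i := 0) (j := 1) (by simp) fun i => by simp [Fin.cons_one]

theorem pairDet_eq_cramer_zero {m : ℕ} (B : Fin (m + 2) → Fin m → ℂ) (x y z : Fin (m + 2) → ℂ) :
    pairDet B x y = Matrix.cramer (Matrix.of fun i : Fin (m + 2) =>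
      (Fin.cons (z i) (Fin.cons (y i) (B i) : Fin (m + 1) → ℂ) : Fin (m + 2) → ℂ)) x 0 := by
  rw [Matrix.cramer_apply, pairDet]
  congr 1
  ext i j
  refine Fin.cases ?_ (fun j => ?_) j <;> simp

theorem pairDet_eq_cramer_one {m : ℕ} (B : Fin (m + 2) → Fin m → ℂ) (x y z : Fin (m + 2) → ℂ) :
    pairDet B x y = Matrix.cramer (Matrix.of fun i : Fin (m + 2) =>
      (Fin.cons (x i) (Fin.cons (z i) (B i) : Fin (m + 1) → ℂ) : Fin (m + 2) → ℂ)) y 1 := by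
  rw [Matrix.cramer_apply, pairDet]
  congr 1
  ext i j
  refine Fin.cases ?_ (fun j => Fin.cases ?_ (fun j => ?_) j) j
  · simp
  · simp
  · have : j.succ.succ ≠ (1 : Fin (m + 2)) := by simp [Fin.ext_iff]
    simp [this]

theorem pairDet_col_left {m : ℕ} (B : Fin (m + 2) → Fin m → ℂ) (y : Fin (m + 2) → ℂ)
    (j : Fin m) : pairDet B (fun i => B i j) y = 0 :=
  Matrix.det_zero_of_column_eq (i := 0) (j := j.succ.succ) (by simp [Fin.ext_iff])
    fun i => by simp

/-- The three-term Plücker relation. -/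
theorem pairDet_plucker {m : ℕ} (B : Fin (m + 2) → Fin m → ℂ) (x y u e : Fin (m + 2) → ℂ) :
    pairDet B x y * pairDet B u e
      = pairDet B u y * pairDet B x e + pairDet B x u * pairDet B y e := by
  set A : Matrix (Fin (m + 2)) (Fin (m + 2)) ℂ := Matrix.of fun i =>
    (Fin.cons (x i) (Fin.cons (y i) (B i) : Fin (m + 1) → ℂ) : Fin (m + 2) → ℂ) with hA
  have key := congrArg (fun s => pairDet B s e) (Matrix.mulVec_cramer A u)
  have hsum : A.mulVec (A.cramer u) = ∑ j, A.cramer u j • fun i => A i j := by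
    ext i
    simp [Matrix.mulVec, dotProduct, mul_comm]
  simp only [pairDet_eq_cramer_zero B _ e 0, hsum, map_sum, map_smul, Pi.smul_apply,
    Finset.sum_apply, smul_eq_mul] at key
  simp only [← pairDet_eq_cramer_zero] at key
  rw [Fin.sum_univ_succ, Fin.sum_univ_succ] at key
  have hz : ∀ j : Fin m, pairDet B (fun i => A i j.succ.succ) e = 0 := fun j => by
    simpa [hA] using pairDet_col_left B e j
  have h0 : A.cramer u 0 = pairDet B u y := by rw [pairDet_eq_cramer_zero B u y x]
  have h1 : A.cramer u (Fin.succ 0) = pairDet B x u := by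
    rw [pairDet_eq_cramer_one B x u y]; rfl
  have c0 : (fun i => A i 0) = x := by ext i; simp [hA]
  have c1 : (fun i => A i (Fin.succ 0)) = y := by ext i; simp [hA]
  simp only [hz, mul_zero, Finset.sum_const_zero, add_zero, h0, h1, c0, c1] at key
  rw [key]
  rfl

theorem pairDet_swap {m : ℕ} (B : Fin (m + 2) → Fin m → ℂ) (x y : Fin (m + 2) → ℂ) :
    pairDet B x y = -pairDet B y x := by
  have h := pairDet_self B (x + y)
  have hl : ∀ a b c, pairDet B (a + b) c = pairDet B a c + pairDet B b c := fun a b c => by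
    simp only [pairDet_eq_cramer_zero B _ c 0, map_add, Pi.add_apply]
  have hr : ∀ a b c, pairDet B c (a + b) = pairDet B c a + pairDet B c b := fun a b c => by
    simp only [pairDet_eq_cramer_one B c _ 0, map_add, Pi.add_apply]
  rw [hl, hr, hr, pairDet_self, pairDet_self] at h
  linear_combination h

/-- A first column equal to the first basis vector deletes the first row and column. -/
theorem pairDet_single_zero {m : ℕ} (B : Fin (m + 2) → Fin m → ℂ) (y : Fin (m + 2) → ℂ) :
    pairDet B (Pi.single 0 1) y = Matrix.det (Matrix.of fun i : Fin (m + 1) =>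
      (Fin.cons (y i.succ) (B i.succ) : Fin (m + 1) → ℂ)) := by
  rw [pairDet, Matrix.det_succ_column_zero, Fin.sum_univ_succ]
  simp
  congr 1

theorem pairDet_single_one {m : ℕ} (B : Fin (m + 2) → Fin m → ℂ) (y : Fin (m + 2) → ℂ) :
    pairDet B (Pi.single 1 1) y = -Matrix.det (Matrix.of fun i : Fin (m + 1) =>
      (Fin.cons (y ((1 : Fin (m + 2)).succAbove i)) (B ((1 : Fin (m + 2)).succAbove i)) :
        Fin (m + 1) → ℂ)) := by
  rw [pairDet, Matrix.det_succ_column_zero, Fin.sum_univ_succ, Fin.sum_univ_succ]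
  have : ∀ i : Fin m, i.succ.succ ≠ (1 : Fin (m + 2)) := fun i => by simp [Fin.ext_iff]
  simp [this]
  congr 1

theorem pairDet_single_single {m : ℕ} (B : Fin (m + 2) → Fin m → ℂ) :
    pairDet B (Pi.single 0 1) (Pi.single 1 1)
      = Matrix.det (Matrix.of fun i : Fin m => B i.succ.succ) := by
  rw [pairDet_single_zero, Matrix.det_succ_column_zero, Fin.sum_univ_succ]
  have : ∀ i : Fin m, i.succ.succ ≠ (1 : Fin (m + 2)) := fun i => by simp [Fin.ext_iff]
  simp [this]
  congr 1

end Determinants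

section DeterminantRatio

theorem hpol_comm (ζ a b : ℂ) : hpol ζ a b = hpol ζ b a := by
  unfold hpol; ring

/-- `Hratio` as a function of the two halves of the variables. -/
def halvesRatio (ζ : ℂ) {k : ℕ} (a b : Fin k → ℂ) : ℂ :=
  (∏ i : Fin k, ∏ j : Fin k, hpol ζ (a i) (b j)) / (vdm a * vdm b)
    * Matrix.det (Matrix.of fun i j : Fin k => (hpol ζ (a i) (b j))⁻¹)

theorem vdm_eq_det_vandermonde {k : ℕ} (y : Fin k → ℂ) : vdm y = (Matrix.vandermonde y).det := by
  rw [Matrix.det_vandermonde, vdm]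
  refine Finset.prod_congr rfl fun i _ => ?_
  rw [← Finset.prod_filter]
  congr 1
  ext j
  simp

theorem vdm_cons {k : ℕ} (x : ℂ) (y : Fin k → ℂ) :
    vdm (Fin.cons x y : Fin (k + 1) → ℂ) = (∏ i, (y i - x)) * vdm y := by
  simp only [vdm, Fin.prod_univ_succ, Fin.cons_zero, Fin.cons_succ, Fin.succ_lt_succ_iff,
    Fin.succ_pos, if_true, if_false, one_mul, Fin.not_lt_zero]

theorem vdm_comp_perm {k : ℕ} (y : Fin k → ℂ) (σ : Equiv.Perm (Fin k)) :
    vdm (y ∘ σ) = Equiv.Perm.sign σ * vdm y := by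
  rw [vdm_eq_det_vandermonde, vdm_eq_det_vandermonde, ← Matrix.det_permute]
  rfl

theorem halvesRatio_comp_perm (ζ : ℂ) {k : ℕ} (a b : Fin k → ℂ) (σ τ : Equiv.Perm (Fin k)) :
    halvesRatio ζ (a ∘ σ) (b ∘ τ) = halvesRatio ζ a b := by
  have hdet : Matrix.det (Matrix.of fun i j : Fin k => (hpol ζ ((a ∘ σ) i) ((b ∘ τ) j))⁻¹)
      = Equiv.Perm.sign σ * (Equiv.Perm.sign τ
        * Matrix.det (Matrix.of fun i j : Fin k => (hpol ζ (a i) (b j))⁻¹)) := by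
    rw [← Matrix.det_permute', ← Matrix.det_permute]
    rfl
  have hprod : (∏ i : Fin k, ∏ j : Fin k, hpol ζ ((a ∘ σ) i) ((b ∘ τ) j))
      = ∏ i : Fin k, ∏ j : Fin k, hpol ζ (a i) (b j) := by
    rw [← Equiv.prod_comp σ fun i => ∏ j, hpol ζ (a i) (b j)]
    exact Finset.prod_congr rfl fun i _ => Equiv.prod_comp τ fun j => hpol ζ (a (σ i)) (b j)
  rw [halvesRatio, hdet, hprod, vdm_comp_perm, vdm_comp_perm, halvesRatio]
  rcases Int.units_eq_one_or (Equiv.Perm.sign σ) with h | h <;>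
  rcases Int.units_eq_one_or (Equiv.Perm.sign τ) with h' | h' <;>
  simp [h, h', div_neg]

/-- The Plücker relation for determinant ratios sharing all but two of the variables in
the second half. -/
theorem halvesRatio_plucker (ζ : ℂ) {m : ℕ} (a : Fin (m + 2) → ℂ) (b : Fin m → ℂ)
    {x y u e : ℂ} (hxy : x ≠ y) (hxu : x ≠ u) (hxe : x ≠ e) (hyu : y ≠ u) (hye : y ≠ e)
    (hue : u ≠ e) :
    (y - x) * (e - u) * halvesRatio ζ a (Fin.cons x (Fin.cons y b : Fin (m + 1) → ℂ))
        * halvesRatio ζ a (Fin.cons u (Fin.cons e b : Fin (m + 1) → ℂ))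
      = (y - u) * (e - x) * halvesRatio ζ a (Fin.cons u (Fin.cons y b : Fin (m + 1) → ℂ))
          * halvesRatio ζ a (Fin.cons x (Fin.cons e b : Fin (m + 1) → ℂ))
        + (u - x) * (e - y) * halvesRatio ζ a (Fin.cons x (Fin.cons u b : Fin (m + 1) → ℂ))
          * halvesRatio ζ a (Fin.cons y (Fin.cons e b : Fin (m + 1) → ℂ)) := by
  let D : ℂ → ℂ → ℂ := fun x y => pairDet (fun i j => (hpol ζ (a i) (b j))⁻¹)
    (fun i => (hpol ζ (a i) x)⁻¹) (fun i => (hpol ζ (a i) y)⁻¹)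
  let g : ℂ → ℂ := fun x => (∏ i, hpol ζ (a i) x) / ∏ j, (b j - x)
  let C : ℂ := (∏ i, ∏ j, hpol ζ (a i) (b j)) / (vdm a * vdm b)
  have key : ∀ x y, x ≠ y →
      (y - x) * halvesRatio ζ a (Fin.cons x (Fin.cons y b : Fin (m + 1) → ℂ))
        = C * g x * g y * D x y := fun x y hne => by
    have hdet : Matrix.det (Matrix.of fun i j : Fin (m + 2) => (hpol ζ (a i)
        ((Fin.cons x (Fin.cons y b : Fin (m + 1) → ℂ) : Fin (m + 2) → ℂ) j))⁻¹) = D x y := by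
      simp only [D, pairDet]
      congr 1
      ext i j
      refine Fin.cases ?_ (fun j => Fin.cases ?_ (fun j => ?_) j) j <;> simp
    have hprod : (∏ i : Fin (m + 2), ∏ j : Fin (m + 2), hpol ζ (a i)
        ((Fin.cons x (Fin.cons y b : Fin (m + 1) → ℂ) : Fin (m + 2) → ℂ) j))
        = (∏ i, hpol ζ (a i) x) * ((∏ i, hpol ζ (a i) y) * ∏ i, ∏ j, hpol ζ (a i) (b j)) := by
      rw [← Finset.prod_mul_distrib, ← Finset.prod_mul_distrib]
      refine Finset.prod_congr rfl fun i _ => ?_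
      rw [Fin.prod_univ_succ, Fin.prod_univ_succ]
      simp only [Fin.cons_zero, Fin.cons_succ]
    have hV : vdm (Fin.cons x (Fin.cons y b : Fin (m + 1) → ℂ) : Fin (m + 2) → ℂ)
        = (y - x) * (∏ j, (b j - x)) * ((∏ j, (b j - y)) * vdm b) := by
      rw [vdm_cons, vdm_cons, Fin.prod_univ_succ]
      simp only [Fin.cons_zero, Fin.cons_succ]
    have h0 : (y - x) * (y - x)⁻¹ = 1 := mul_inv_cancel₀ (sub_ne_zero.2 hne.symm)
    rw [halvesRatio, hdet, hprod, hV]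
    simp only [C, g, div_eq_mul_inv, mul_inv]
    linear_combination (∏ i, hpol ζ (a i) x) * ((∏ i, hpol ζ (a i) y)
      * ∏ i, ∏ j, hpol ζ (a i) (b j)) * ((vdm a)⁻¹ * ((∏ j, (b j - x))⁻¹ *
        ((∏ j, (b j - y))⁻¹ * (vdm b)⁻¹))) * D x y * h0
  have hp := pairDet_plucker (fun i j => (hpol ζ (a i) (b j))⁻¹)
    (fun i => (hpol ζ (a i) x)⁻¹) (fun i => (hpol ζ (a i) y)⁻¹)
    (fun i => (hpol ζ (a i) u)⁻¹) (fun i => (hpol ζ (a i) e)⁻¹)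
  change D x y * D u e = D u y * D x e + D x u * D y e at hp
  calc _ = ((y - x) * halvesRatio ζ a (Fin.cons x (Fin.cons y b : Fin (m + 1) → ℂ)))
        * ((e - u) * halvesRatio ζ a (Fin.cons u (Fin.cons e b : Fin (m + 1) → ℂ))) := by ring
    _ = ((y - u) * halvesRatio ζ a (Fin.cons u (Fin.cons y b : Fin (m + 1) → ℂ)))
          * ((e - x) * halvesRatio ζ a (Fin.cons x (Fin.cons e b : Fin (m + 1) → ℂ)))
        + ((u - x) * halvesRatio ζ a (Fin.cons x (Fin.cons u b : Fin (m + 1) → ℂ)))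
          * ((e - y) * halvesRatio ζ a (Fin.cons y (Fin.cons e b : Fin (m + 1) → ℂ))) := by
      rw [key x y hxy, key u e hue, key u y hyu.symm, key x e hxe, key x u hxu, key y e hye]
      linear_combination C ^ 2 * g x * g y * g u * g e * hp
    _ = _ := by ring

theorem halvesRatio_cons_cons (ζ : ℂ) {m : ℕ} (p r : ℂ) (a b : Fin m → ℂ) :
    halvesRatio ζ (Fin.cons p a : Fin (m + 1) → ℂ) (Fin.cons r b : Fin (m + 1) → ℂ)
      = (∏ i, ∏ j, hpol ζ (a i) (b j)) / (vdm a * vdm b)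
        * ((∏ j, hpol ζ p (b j)) / ∏ i, (a i - p)) * ((∏ i, hpol ζ (a i) r) / ∏ j, (b j - r))
        * hpol ζ p r * Matrix.det (Matrix.of fun i j : Fin (m + 1) =>
          (hpol ζ ((Fin.cons p a : Fin (m + 1) → ℂ) i)
            ((Fin.cons r b : Fin (m + 1) → ℂ) j))⁻¹) := by
  rw [halvesRatio, vdm_cons, vdm_cons]
  simp only [Fin.prod_univ_succ (n := m), Fin.cons_zero, Fin.cons_succ,
    Finset.prod_mul_distrib, div_eq_mul_inv, mul_inv]
  ring

/-- The Desnanot–Jacobi identity for determinant ratios. -/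
theorem halvesRatio_desnanot_jacobi (ζ : ℂ) {m : ℕ} (a b : Fin m → ℂ) {p q r s : ℂ}
    (hpq : p ≠ q) (hrs : r ≠ s) :
    (q - p) * (s - r) * halvesRatio ζ a b * halvesRatio ζ
        (Fin.cons p (Fin.cons q a : Fin (m + 1) → ℂ)) (Fin.cons r (Fin.cons s b : Fin (m + 1) → ℂ))
      = hpol ζ p s * hpol ζ q r
          * halvesRatio ζ (Fin.cons p a : Fin (m + 1) → ℂ) (Fin.cons r b : Fin (m + 1) → ℂ)
          * halvesRatio ζ (Fin.cons q a : Fin (m + 1) → ℂ) (Fin.cons s b : Fin (m + 1) → ℂ)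
        - hpol ζ p r * hpol ζ q s
          * halvesRatio ζ (Fin.cons p a : Fin (m + 1) → ℂ) (Fin.cons s b : Fin (m + 1) → ℂ)
          * halvesRatio ζ (Fin.cons q a : Fin (m + 1) → ℂ) (Fin.cons r b : Fin (m + 1) → ℂ) := by
  let c : Fin (m + 2) → ℂ := Fin.cons p (Fin.cons q a : Fin (m + 1) → ℂ)
  let col : ℂ → Fin (m + 2) → ℂ := fun x i => (hpol ζ (c i) x)⁻¹
  let B : Fin (m + 2) → Fin m → ℂ := fun i j => (hpol ζ (c i) (b j))⁻¹
  let d : ℂ → ℂ → ℂ := fun p r => Matrix.det (Matrix.of fun i j : Fin (m + 1) =>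
    (hpol ζ ((Fin.cons p a : Fin (m + 1) → ℂ) i) ((Fin.cons r b : Fin (m + 1) → ℂ) j))⁻¹)
  have hp := pairDet_plucker B (col r) (col s) (Pi.single 0 1) (Pi.single 1 1)
  have hq : ∀ x, pairDet B (Pi.single 0 1) (col x) = d q x := fun x => by
    rw [pairDet_single_zero]
    congr 1
    ext i j
    refine Fin.cases ?_ (fun j => ?_) j <;> simp [B, col, c]
  have hp' : ∀ x, pairDet B (col x) (Pi.single 1 1) = d p x := fun x => by
    rw [pairDet_swap, pairDet_single_one, neg_neg]
    congr 1
    ext i j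
    have hc : c ((1 : Fin (m + 2)).succAbove i) = (Fin.cons p a : Fin (m + 1) → ℂ) i := by
      refine Fin.cases ?_ (fun i => ?_) i <;> simp [c]
    refine Fin.cases ?_ (fun j => ?_) j <;> simp [B, col, hc]
  have hrs' : pairDet B (col r) (col s) = Matrix.det (Matrix.of fun i j : Fin (m + 2) =>
      (hpol ζ (c i) ((Fin.cons r (Fin.cons s b : Fin (m + 1) → ℂ) : Fin (m + 2) → ℂ) j))⁻¹) := by
    rw [pairDet]
    congr 1
    ext i j
    refine Fin.cases ?_ (fun j => Fin.cases ?_ (fun j => ?_) j) j <;> simp [B, col]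
  have hab : pairDet B (Pi.single 0 1) (Pi.single 1 1)
      = Matrix.det (Matrix.of fun i j : Fin m => (hpol ζ (a i) (b j))⁻¹) := by
    rw [pairDet_single_single]
    congr 1
  rw [hq, pairDet_swap B (col r) (Pi.single 0 1), hq, hp', hp', hrs', hab] at hp
  let C : ℂ := (∏ i, ∏ j, hpol ζ (a i) (b j)) / (vdm a * vdm b)
  let f : ℂ → ℂ := fun p => (∏ j, hpol ζ p (b j)) / ∏ i, (a i - p)
  let g : ℂ → ℂ := fun r => (∏ i, hpol ζ (a i) r) / ∏ j, (b j - r)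
  have hsmall : ∀ p r, halvesRatio ζ (Fin.cons p a : Fin (m + 1) → ℂ)
      (Fin.cons r b : Fin (m + 1) → ℂ) = C * f p * g r * hpol ζ p r * d p r :=
    fun p r => halvesRatio_cons_cons ζ p r a b
  have hbig : (q - p) * (s - r) * halvesRatio ζ c
      (Fin.cons r (Fin.cons s b : Fin (m + 1) → ℂ) : Fin (m + 2) → ℂ)
      = C * f p * f q * g r * g s * hpol ζ p r * hpol ζ p s * hpol ζ q r * hpol ζ q s
        * Matrix.det (Matrix.of fun i j : Fin (m + 2) => (hpol ζ (c i)
          ((Fin.cons r (Fin.cons s b : Fin (m + 1) → ℂ) : Fin (m + 2) → ℂ) j))⁻¹) := by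
    have h0 : (q - p) * (q - p)⁻¹ = 1 := mul_inv_cancel₀ (sub_ne_zero.2 hpq.symm)
    have h1 : (s - r) * (s - r)⁻¹ = 1 := mul_inv_cancel₀ (sub_ne_zero.2 hrs.symm)
    rw [halvesRatio_cons_cons, vdm_cons, vdm_cons]
    generalize Matrix.det (n := Fin (m + 2)) (R := ℂ) _ = δ
    simp only [C, f, g, Fin.prod_univ_succ (n := m), Fin.cons_zero, Fin.cons_succ,
      Finset.prod_mul_distrib, div_eq_mul_inv, mul_inv]
    refine Eq.trans ?_ (one_mul _)
    rw [show (1 : ℂ) = ((q - p) * (q - p)⁻¹) * ((s - r) * (s - r)⁻¹) by rw [h0, h1, one_mul]]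
    ring
  rw [mul_right_comm, hbig, hsmall, hsmall, hsmall, hsmall, halvesRatio]
  linear_combination C ^ 2 * f p * f q * g r * g s * hpol ζ p r * hpol ζ p s * hpol ζ q r
    * hpol ζ q s * hp

/-- The bilinear identity for determinant ratios in which `x`, `y`, `u` belong to the second
half and the auxiliary variable `v` to the first half. -/
theorem halvesRatio_bilinear (ζ : ℂ) {m : ℕ} (a : Fin (m + 1) → ℂ) (b : Fin m → ℂ)
    {x y u : ℂ} (v : ℂ) (hxy : x ≠ y) (hyu : y ≠ u) (hux : u ≠ x) :
    (x - y) * hpol ζ u v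
        * halvesRatio ζ (Fin.cons v a : Fin (m + 2) → ℂ)
            (Fin.cons x (Fin.cons y b : Fin (m + 1) → ℂ) : Fin (m + 2) → ℂ)
        * halvesRatio ζ a (Fin.cons u b : Fin (m + 1) → ℂ)
      + (y - u) * hpol ζ x v
        * halvesRatio ζ (Fin.cons v a : Fin (m + 2) → ℂ)
            (Fin.cons y (Fin.cons u b : Fin (m + 1) → ℂ) : Fin (m + 2) → ℂ)
        * halvesRatio ζ a (Fin.cons x b : Fin (m + 1) → ℂ)
      + (u - x) * hpol ζ y v
        * halvesRatio ζ (Fin.cons v a : Fin (m + 2) → ℂ)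
            (Fin.cons u (Fin.cons x b : Fin (m + 1) → ℂ) : Fin (m + 2) → ℂ)
        * halvesRatio ζ a (Fin.cons y b : Fin (m + 1) → ℂ) = 0 := by
  let c : Fin (m + 2) → ℂ := Fin.cons v a
  let col : ℂ → Fin (m + 2) → ℂ := fun x i => (hpol ζ (c i) x)⁻¹
  let B : Fin (m + 2) → Fin m → ℂ := fun i j => (hpol ζ (c i) (b j))⁻¹
  let d : ℂ → ℂ := fun x => Matrix.det (Matrix.of fun i j : Fin (m + 1) =>
    (hpol ζ (a i) ((Fin.cons x b : Fin (m + 1) → ℂ) j))⁻¹)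
  have hd : ∀ x, pairDet B (col x) (Pi.single 0 1) = -d x := fun x => by
    rw [pairDet_swap, pairDet_single_zero]
    congr 2
    ext i j
    refine Fin.cases ?_ (fun j => ?_) j <;> simp [B, col, c]
  have hp := pairDet_plucker B (col x) (col y) (col u) (Pi.single 0 1)
  rw [hd, hd, hd, pairDet_swap B (col u) (col y), pairDet_swap B (col x) (col u)] at hp
  let C : ℂ := (∏ i, ∏ j, hpol ζ (a i) (b j)) / (vdm a * vdm b)
  let g : ℂ → ℂ := fun r => (∏ i, hpol ζ (a i) r) / ∏ j, (b j - r)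
  have hsmall : ∀ x, halvesRatio ζ a (Fin.cons x b : Fin (m + 1) → ℂ) = C * g x * d x :=
    fun x => by
    rw [halvesRatio, vdm_cons]
    simp only [C, g, d]
    generalize Matrix.det (n := Fin (m + 1)) (R := ℂ) _ = δ
    have : (∏ i, ∏ j, hpol ζ (a i) ((Fin.cons x b : Fin (m + 1) → ℂ) j))
        = (∏ i, hpol ζ (a i) x) * ∏ i, ∏ j, hpol ζ (a i) (b j) := by
      rw [← Finset.prod_mul_distrib]
      refine Finset.prod_congr rfl fun i _ => ?_
      rw [Fin.prod_univ_succ]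
      simp only [Fin.cons_zero, Fin.cons_succ]
    rw [this]
    simp only [div_eq_mul_inv, mul_inv]
    ring
  let f : ℂ := (∏ j, hpol ζ v (b j)) / ∏ i, (a i - v)
  have hbig : ∀ x y, x ≠ y → (y - x) * halvesRatio ζ c
      (Fin.cons x (Fin.cons y b : Fin (m + 1) → ℂ) : Fin (m + 2) → ℂ)
      = C * f * g x * g y * hpol ζ v x * hpol ζ v y * pairDet B (col x) (col y) := by
    intro x y hne
    have hdet : Matrix.det (Matrix.of fun i j : Fin (m + 2) => (hpol ζ (c i)
        ((Fin.cons x (Fin.cons y b : Fin (m + 1) → ℂ) : Fin (m + 2) → ℂ) j))⁻¹)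
        = pairDet B (col x) (col y) := by
      rw [pairDet]
      congr 1
      ext i j
      refine Fin.cases ?_ (fun j => Fin.cases ?_ (fun j => ?_) j) j <;> simp [B, col]
    have h0 : (y - x) * (y - x)⁻¹ = 1 := mul_inv_cancel₀ (sub_ne_zero.2 hne.symm)
    have hprod : (∏ i, ∏ j, hpol ζ (a i) ((Fin.cons y b : Fin (m + 1) → ℂ) j))
        = (∏ i, hpol ζ (a i) y) * ∏ i, ∏ j, hpol ζ (a i) (b j) := by
      rw [← Finset.prod_mul_distrib]
      refine Finset.prod_congr rfl fun i _ => ?_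
      rw [Fin.prod_univ_succ]
      simp only [Fin.cons_zero, Fin.cons_succ]
    rw [halvesRatio_cons_cons, hdet, vdm_cons, hprod,
      Fin.prod_univ_succ (n := m) fun j => hpol ζ v ((Fin.cons y b : Fin (m + 1) → ℂ) j),
      Fin.prod_univ_succ (n := m) fun j => (Fin.cons y b : Fin (m + 1) → ℂ) j - x]
    generalize pairDet B (col x) (col y) = δ
    simp only [C, f, g, Fin.cons_zero, Fin.cons_succ, div_eq_mul_inv, mul_inv]
    refine Eq.trans ?_ (one_mul _)
    rw [← h0]
    ring
  have e₁ := hbig x y hxy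
  have e₂ := hbig y u hyu
  have e₃ := hbig u x hux
  rw [hsmall, hsmall, hsmall, hpol_comm ζ u v, hpol_comm ζ x v, hpol_comm ζ y v]
  linear_combination (-hpol ζ v u * C * g u * d u) * e₁ - (hpol ζ v x * C * g x * d x) * e₂
    - (hpol ζ v y * C * g y * d y) * e₃
    + C ^ 2 * f * g x * g y * g u * hpol ζ v x * hpol ζ v y * hpol ζ v u * hp

end DeterminantRatio

section Generic

/-- `p` holds outside the zero set of some nonzero polynomial. -/
def HoldsGenerically {σ : Type*} (p : (σ → ℂ) → Prop) : Prop :=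
  ∃ D : MvPolynomial σ ℂ, D ≠ 0 ∧ ∀ w, MvPolynomial.eval w D ≠ 0 → p w

/-- `f` is a polynomial function. -/
def IsPolyFun {σ : Type*} (f : (σ → ℂ) → ℂ) : Prop :=
  ∃ P : MvPolynomial σ ℂ, ∀ w, f w = MvPolynomial.eval w P

variable {σ τ : Type*}

theorem HoldsGenerically.mono {p q : (σ → ℂ) → Prop} (hp : HoldsGenerically p)
    (h : ∀ w, p w → q w) : HoldsGenerically q :=
  let ⟨D, hD, hp⟩ := hp
  ⟨D, hD, fun w hw => h w (hp w hw)⟩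

theorem HoldsGenerically.and {p q : (σ → ℂ) → Prop} (hp : HoldsGenerically p)
    (hq : HoldsGenerically q) : HoldsGenerically fun w => p w ∧ q w := by
  obtain ⟨D, hD, hp⟩ := hp
  obtain ⟨E, hE, hq⟩ := hq
  refine ⟨D * E, mul_ne_zero hD hE, fun w hw => ?_⟩
  rw [map_mul] at hw
  exact ⟨hp w (left_ne_zero_of_mul hw), hq w (right_ne_zero_of_mul hw)⟩

theorem HoldsGenerically.forall {ι : Type*} [Finite ι] {p : ι → (σ → ℂ) → Prop}
    (hp : ∀ i, HoldsGenerically (p i)) : HoldsGenerically fun w => ∀ i, p i w := by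
  cases nonempty_fintype ι
  choose D hD hp using hp
  refine ⟨∏ i, D i, Finset.prod_ne_zero_iff.2 fun i _ => hD i, fun w hw i => hp i w ?_⟩
  rw [map_prod, Finset.prod_ne_zero_iff] at hw
  exact hw i (Finset.mem_univ i)

theorem IsPolyFun.const (c : ℂ) : IsPolyFun fun _ : σ → ℂ => c :=
  ⟨MvPolynomial.C c, fun w => by simp⟩

theorem IsPolyFun.coord (i : σ) : IsPolyFun fun w : σ → ℂ => w i :=
  ⟨MvPolynomial.X i, fun w => by simp⟩

theorem IsPolyFun.add {f g : (σ → ℂ) → ℂ} (hf : IsPolyFun f) (hg : IsPolyFun g) :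
    IsPolyFun fun w => f w + g w :=
  let ⟨P, hP⟩ := hf
  let ⟨Q, hQ⟩ := hg
  ⟨P + Q, fun w => by simp [hP, hQ]⟩

theorem IsPolyFun.mul {f g : (σ → ℂ) → ℂ} (hf : IsPolyFun f) (hg : IsPolyFun g) :
    IsPolyFun fun w => f w * g w :=
  let ⟨P, hP⟩ := hf
  let ⟨Q, hQ⟩ := hg
  ⟨P * Q, fun w => by simp [hP, hQ]⟩

theorem IsPolyFun.sub {f g : (σ → ℂ) → ℂ} (hf : IsPolyFun f) (hg : IsPolyFun g) :
    IsPolyFun fun w => f w - g w :=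
  let ⟨P, hP⟩ := hf
  let ⟨Q, hQ⟩ := hg
  ⟨P - Q, fun w => by simp [hP, hQ]⟩

theorem IsPolyFun.comp {f : (τ → ℂ) → ℂ} {g : τ → (σ → ℂ) → ℂ} (hf : IsPolyFun f)
    (hg : ∀ j, IsPolyFun (g j)) : IsPolyFun fun w => f fun j => g j w := by
  obtain ⟨P, hP⟩ := hf
  choose Q hQ using hg
  refine ⟨MvPolynomial.bind₁ Q P, fun w => ?_⟩
  simp only [hP]
  rw [← MvPolynomial.coe_aeval_eq_eval, ← MvPolynomial.coe_aeval_eq_eval]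
  simp only [RingHom.coe_coe, MvPolynomial.aeval_bind₁]
  congr 2
  funext j
  rw [hQ, ← MvPolynomial.coe_aeval_eq_eval]
  rfl

theorem IsPolyFun.hpol (ζ : ℂ) {f g : (σ → ℂ) → ℂ} (hf : IsPolyFun f) (hg : IsPolyFun g) :
    IsPolyFun fun w => hpol ζ (f w) (g w) :=
  ((const 1).sub (((const (3 + ζ ^ 2)).mul hf).mul hg)).add
    ((((const (1 - ζ ^ 2)).mul hf).mul hg).mul (hf.add hg))

/-- A polynomial function vanishing generically vanishes identically. -/
theorem IsPolyFun.eq_zero_of_generically {f : (σ → ℂ) → ℂ} (hf : IsPolyFun f)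
    (h : HoldsGenerically fun w => f w = 0) (w : σ → ℂ) : f w = 0 := by
  obtain ⟨P, hP⟩ := hf
  obtain ⟨D, hD, h⟩ := h
  have : P * D = 0 := MvPolynomial.funext fun w => by
    rw [map_mul, map_zero]
    by_cases hw : MvPolynomial.eval w D = 0
    · rw [hw, mul_zero]
    · rw [← hP, h w hw, zero_mul]
  rw [hP, (mul_eq_zero.1 this).resolve_right hD, map_zero]

theorem IsPolyFun.eq_of_generically {f g : (σ → ℂ) → ℂ} (hf : IsPolyFun f) (hg : IsPolyFun g)
    (h : HoldsGenerically fun w => f w = g w) (w : σ → ℂ) : f w = g w :=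
  sub_eq_zero.1 <| (hf.sub hg).eq_zero_of_generically (h.mono fun _ => sub_eq_zero.2) w

theorem IsPolyFun.generically_ne_zero {f : (σ → ℂ) → ℂ} (hf : IsPolyFun f) {w₀ : σ → ℂ}
    (h : f w₀ ≠ 0) : HoldsGenerically fun w => f w ≠ 0 := by
  obtain ⟨P, hP⟩ := hf
  refine ⟨P, fun h0 => h ?_, fun w hw => by simpa only [hP] using hw⟩
  rw [hP, h0, map_zero]

theorem generically_injective [Finite σ] :
    HoldsGenerically fun w : σ → ℂ => Function.Injective w := by
  classical
  have : HoldsGenerically fun w : σ → ℂ => ∀ i j, i ≠ j → w i - w j ≠ 0 := by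
    refine .forall fun i => .forall fun j => ?_
    by_cases hij : i = j
    · exact ⟨1, one_ne_zero, fun w _ h => (h hij).elim⟩
    · refine HoldsGenerically.mono (((IsPolyFun.coord i).sub (.coord j)).generically_ne_zero
        (w₀ := Pi.single i 1) ?_) fun w hw _ => hw
      simp [Pi.single_eq_of_ne' hij]
  refine this.mono fun w hw i j hij => ?_
  by_contra hne
  exact hw i j hne (sub_eq_zero.2 hij)

theorem generically_hpol_ne_zero [Finite σ] (ζ : ℂ) :
    HoldsGenerically fun w : σ → ℂ => ∀ i j, hpol ζ (w i) (w j) ≠ 0 :=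
  .forall fun i => .forall fun j =>
    (IsPolyFun.hpol ζ (.coord i) (.coord j)).generically_ne_zero (w₀ := 0) (by simp [_root_.hpol])

end Generic

section Nonvanishing

open Polynomial in
/-- `hpol ζ c` as a polynomial in its last variable. -/
def hpolPoly (ζ c : ℂ) : Polynomial ℂ :=
  1 - C ((3 + ζ ^ 2) * c) * X + C ((1 - ζ ^ 2) * c ^ 2) * X + C ((1 - ζ ^ 2) * c) * X ^ 2

theorem eval_hpolPoly (ζ c y : ℂ) : (hpolPoly ζ c).eval y = hpol ζ c y := by
  simp [hpolPoly, hpol]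
  ring

theorem hpolPoly_ne_zero (ζ c : ℂ) : hpolPoly ζ c ≠ 0 := fun h => by
  have := eval_hpolPoly ζ c 0
  simp [h, hpol] at this

theorem exists_hpol_eq_zero (ζ : ℂ) {c : ℂ} (hc : c ≠ 0) : ∃ y, hpol ζ y c = 0 := by
  obtain ⟨y, hy⟩ := IsAlgClosed.exists_root (hpolPoly ζ c) fun hdeg => by
    have heval : ∀ y, hpol ζ c y = (hpolPoly ζ c).coeff 0 := fun y => by
      rw [← eval_hpolPoly]
      conv_lhs => rw [Polynomial.eq_C_of_degree_eq_zero hdeg]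
      simp
    have h1 := (heval 1).trans (heval 0).symm
    have h2 := (heval (-1)).trans (heval 0).symm
    simp only [hpol] at h1 h2
    refine hc ?_
    linear_combination (c * h1 + (c + 2) * h2) / 8
  exact ⟨y, by rw [hpol_comm, ← eval_hpolPoly]; exact hy⟩

theorem exists_forall_eval_ne_zero {ι : Type*} [Fintype ι] (p : ι → Polynomial ℂ)
    (hp : ∀ i, p i ≠ 0) : ∃ y, ∀ i, (p i).eval y ≠ 0 := by
  obtain ⟨y, hy⟩ : ∃ y, (∏ i, p i).eval y ≠ 0 := by
    by_contra! h
    exact Finset.prod_ne_zero_iff.2 (fun i _ => hp i)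
      (Polynomial.funext fun y => by rw [h, Polynomial.eval_zero])
  rw [Polynomial.eval_prod, Finset.prod_ne_zero_iff] at hy
  exact ⟨y, fun i => hy i (Finset.mem_univ i)⟩

theorem exists_det_inv_hpol_ne_zero (ζ : ℂ) (k : ℕ) : ∃ a b : Fin k → ℂ,
    Function.Injective a ∧ Function.Injective b ∧ (∀ i j, hpol ζ (a i) (b j) ≠ 0) ∧
      Matrix.det (Matrix.of fun i j : Fin k => (hpol ζ (a i) (b j))⁻¹) ≠ 0 := by
  induction k with
  | zero => exact ⟨0, 0, Function.injective_of_subsingleton _,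
      Function.injective_of_subsingleton _, fun i => i.elim0, by simp⟩
  | succ k ih =>
    obtain ⟨a, b, ha, hb, hab, hdet⟩ := ih
    classical
    obtain ⟨x₀, y₀, hxy, hay, hxb⟩ : ∃ x₀ y₀, hpol ζ x₀ y₀ = 0 ∧ (∀ i, hpol ζ (a i) y₀ ≠ 0) ∧
        ∀ j, hpol ζ x₀ (b j) ≠ 0 := by
      obtain ⟨y₀, hy⟩ := exists_forall_eval_ne_zero
        (fun o : Option (Fin k ⊕ Σ j, ↥(hpolPoly ζ (b j)).roots.toFinset) =>
          o.elim Polynomial.X (Sum.elim (fun i => hpolPoly ζ (a i)) fun z => hpolPoly ζ z.2))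
        (by rintro (_ | _ | _) <;> simp [hpolPoly_ne_zero])
      have hy0 : y₀ ≠ 0 := by simpa using hy none
      obtain ⟨x₀, hx⟩ := exists_hpol_eq_zero ζ hy0
      refine ⟨x₀, y₀, hx, fun i => by simpa [eval_hpolPoly] using hy (some (.inl i)),
        fun j hj => ?_⟩
      refine hy (some (.inr ⟨j, x₀, ?_⟩)) (by simpa [eval_hpolPoly] using hx)
      simp [hpolPoly_ne_zero, Polynomial.IsRoot, eval_hpolPoly, hpol_comm ζ (b j), hj]
    let c : Fin (k + 1) → ℂ := Fin.cons x₀ a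
    let minor : Fin (k + 1) → ℂ := fun i => Matrix.det (Matrix.of fun i' j : Fin k =>
      (hpol ζ (c (i.succAbove i')) (b j))⁻¹)
    let P : Polynomial ℂ := ∑ i : Fin (k + 1), Polynomial.C ((-1) ^ (i : ℕ) * minor i)
      * ∏ i' : Fin k, hpolPoly ζ (c (i.succAbove i'))
    have hP : P ≠ 0 := fun h => by
      have h0 : P.eval y₀ = (∏ i, hpol ζ (a i) y₀)
          * Matrix.det (Matrix.of fun i j : Fin k => (hpol ζ (a i) (b j))⁻¹) := by
        simp only [P, Polynomial.eval_finsetSum, Polynomial.eval_mul, Polynomial.eval_C,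
          Polynomial.eval_prod, eval_hpolPoly]
        rw [Finset.sum_eq_single 0]
        · simp [c, minor, mul_comm]
        · intro i _ hi
          obtain ⟨i', hi'⟩ := Fin.exists_succAbove_eq hi.symm
          rw [Finset.prod_eq_zero (Finset.mem_univ i') (by rw [hi']; exact hxy), mul_zero]
        · simp
      rw [h, Polynomial.eval_zero] at h0
      exact mul_ne_zero (Finset.prod_ne_zero_iff.2 fun i _ => hay i) hdet h0.symm
    obtain ⟨y, hy⟩ := exists_forall_eval_ne_zero
      (fun o : Option (Fin (k + 1) ⊕ Fin k) =>
        o.elim P (Sum.elim (fun i => hpolPoly ζ (c i)) fun j => Polynomial.X - Polynomial.C (b j)))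
      (by rintro (_ | _ | _) <;> simp [hpolPoly_ne_zero, hP, Polynomial.X_sub_C_ne_zero])
    have hyP : P.eval y ≠ 0 := hy none
    have hyc : ∀ i, hpol ζ (c i) y ≠ 0 := fun i => by
      simpa [eval_hpolPoly] using hy (some (.inl i))
    have hyb : ∀ j, y ≠ b j := fun j => by simpa [sub_eq_zero] using hy (some (.inr j))
    refine ⟨c, Fin.cons y b, Fin.cons_injective_iff.2 ⟨?_, ha⟩,
      Fin.cons_injective_iff.2 ⟨?_, hb⟩, ?_, ?_⟩
    · rintro ⟨i, rfl⟩
      exact hay i hxy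
    · rintro ⟨j, hj⟩
      exact hyb j hj.symm
    · intro i j
      refine Fin.cases (hyc i) (fun j => ?_) j
      refine Fin.cases ?_ (fun i => ?_) i
      · simpa [c] using hxb j
      · simpa [c] using hab i j
    · intro h0
      apply hyP
      rw [Matrix.det_succ_column_zero] at h0
      rw [← mul_zero (∏ i, hpol ζ (c i) y), ← h0, Finset.mul_sum]
      simp only [P, Polynomial.eval_finsetSum, Polynomial.eval_mul, Polynomial.eval_C,
        Polynomial.eval_prod, eval_hpolPoly]
      refine Finset.sum_congr rfl fun i _ => ?_
      have hminor : Matrix.det ((Matrix.of fun i j : Fin (k + 1) => (hpol ζ (c i)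
          ((Fin.cons y b : Fin (k + 1) → ℂ) j))⁻¹).submatrix i.succAbove Fin.succ) = minor i := by
        simp only [minor]
        congr 1
      rw [hminor, Fin.prod_univ_succAbove _ i, Matrix.of_apply, Fin.cons_zero]
      field_simp [hyc i]

end Nonvanishing

section Symmetry

/-- The multiset of entries of a tuple. -/
def entries {ι : Type*} [Fintype ι] (w : ι → ℂ) : Multiset ℂ := Finset.univ.val.map w

theorem cons_mem {n : ℕ} {S : Set ℂ} {x : ℂ} {c : Fin n → ℂ} (hx : x ∈ S)
    (hc : ∀ i, c i ∈ S) (i : Fin (n + 1)) : (Fin.cons x c : Fin (n + 1) → ℂ) i ∈ S :=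
  Fin.cases (motive := fun i => (Fin.cons x c : Fin (n + 1) → ℂ) i ∈ S) hx hc i

theorem exists_perm_of_entries_eq {ι : Type*} [Fintype ι] {w w' : ι → ℂ}
    (h : entries w = entries w') : ∃ σ : Equiv.Perm ι, w = w' ∘ σ := by
  classical
  have hcard : ∀ z, Fintype.card {i // w i = z} = Fintype.card {i // w' i = z} := fun z => by
    have := congrArg (Multiset.count z) h
    simp only [entries, Multiset.count_map] at this
    rw [Fintype.card_subtype, Fintype.card_subtype]
    simpa [Finset.card_def, eq_comm] using this
  let e : ι ≃ ι := Equiv.ofFiberEquiv fun z => Fintype.equivOfCardEq (hcard z)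
  exact ⟨e, funext fun i => (Equiv.ofFiberEquiv_map _ i).symm⟩

theorem entries_cons {n : ℕ} (x : ℂ) (a : Fin n → ℂ) :
    entries (Fin.cons x a : Fin (n + 1) → ℂ) = {x} + entries a := by
  simp only [entries, Fin.univ_val_map, List.ofFn_cons]
  rfl

theorem entries_append {m n : ℕ} (a : Fin m → ℂ) (b : Fin n → ℂ) :
    entries (Fin.append a b) = entries a + entries b := by
  simp only [entries, Fin.univ_val_map, List.ofFn_fin_append, Multiset.coe_add]

theorem entries_comp_equiv {ι κ : Type*} [Fintype ι] [Fintype κ] (w : ι → ℂ) (e : κ ≃ ι) :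
    entries (w ∘ e) = entries w := by
  rw [entries, ← Multiset.map_map, entries]
  congr 1
  exact congrArg Finset.val (Finset.map_univ_equiv e)

theorem entries_sumElim {ι κ : Type*} [Fintype ι] [Fintype κ] (a : ι → ℂ) (b : κ → ℂ) :
    entries (Sum.elim a b) = entries a + entries b := by
  simp [entries, ← Finset.univ_disjSum_univ, Finset.disjSum, Multiset.disjSum, Multiset.map_map]

theorem entries_extL {m n : ℕ} (w : Fin m → ℂ) (l : List ℂ) (h : n = m + l.length) :
    entries (extL w l : Fin n → ℂ) = entries w + (l : Multiset ℂ) := by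
  subst h
  simp only [entries, Fin.univ_val_map, Multiset.coe_add]
  congr 1
  refine List.ext_getElem (by simp) fun i h₁ h₂ => ?_
  rw [List.length_append, List.length_ofFn] at h₂
  by_cases hi : i < m
  · simp [extL, hi]
  · rw [List.getElem_append_right (by simpa using hi)]
    simp [extL, hi, List.getElem?_eq_getElem (show i - m < l.length by omega)]

/-- The `2k`-tuple with prescribed halves. -/
def joinHalves {k : ℕ} (a b : Fin k → ℂ) : Fin (2 * k) → ℂ :=
  Fin.append a b ∘ finCongr (two_mul k)

theorem firstHalf_joinHalves {k : ℕ} (a b : Fin k → ℂ) : firstHalf (joinHalves a b) = a :=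
  funext fun i => Fin.append_left a b i

theorem secondHalf_joinHalves {k : ℕ} (a b : Fin k → ℂ) : secondHalf (joinHalves a b) = b :=
  funext fun i => Fin.append_right a b i

theorem joinHalves_halves {k : ℕ} (w : Fin (2 * k) → ℂ) :
    joinHalves (firstHalf w) (secondHalf w) = w := by
  funext j
  obtain ⟨i, rfl⟩ := (finCongr (two_mul k)).symm.surjective j
  refine Fin.addCases (fun i => ?_) (fun i => ?_) i
  · simp only [joinHalves, Function.comp_apply, Equiv.apply_symm_apply, Fin.append_left]
    rfl
  · simp only [joinHalves, Function.comp_apply, Equiv.apply_symm_apply, Fin.append_right]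
    rfl

theorem entries_joinHalves {k : ℕ} (a b : Fin k → ℂ) :
    entries (joinHalves a b) = entries a + entries b := by
  rw [joinHalves, entries_comp_equiv, entries_append]

/-- The determinant ratio with halves `a` and `b` is well defined. -/
def HalvesRatioDefined (ζ : ℂ) {k : ℕ} (a b : Fin k → ℂ) : Prop :=
  Function.Injective a ∧ Function.Injective b ∧ ∀ i j, hpol ζ (a i) (b j) ≠ 0

theorem IsHFamily.apply_joinHalves {ζ : ℂ} {H : (k : ℕ) → (Fin (2 * k) → ℂ) → ℂ}
    (hH : IsHFamily ζ H) {k : ℕ} {a b : Fin k → ℂ} (h : HalvesRatioDefined ζ a b) :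
    H k (joinHalves a b) = halvesRatio ζ a b := by
  rw [hH.2.2 k _ ?_]
  · change halvesRatio ζ (firstHalf _) (secondHalf _) = _
    rw [firstHalf_joinHalves, secondHalf_joinHalves]
  · rw [HratioDefined, firstHalf_joinHalves, secondHalf_joinHalves]
    exact ⟨fun _ _ => h.1.ne, fun _ _ => h.2.1.ne, h.2.2⟩

theorem IsHFamily.exists_ne_zero {ζ : ℂ} {H : (k : ℕ) → (Fin (2 * k) → ℂ) → ℂ}
    (hH : IsHFamily ζ H) (k : ℕ) : ∃ a b : Fin k → ℂ, H k (joinHalves a b) ≠ 0 := by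
  obtain ⟨a, b, ha, hb, hab, hdet⟩ := exists_det_inv_hpol_ne_zero ζ k
  refine ⟨a, b, ?_⟩
  rw [hH.apply_joinHalves ⟨ha, hb, hab⟩, halvesRatio, vdm_eq_det_vandermonde,
    vdm_eq_det_vandermonde]
  refine mul_ne_zero (div_ne_zero ?_ (mul_ne_zero ?_ ?_)) hdet
  · exact Finset.prod_ne_zero_iff.2 fun i _ => Finset.prod_ne_zero_iff.2 fun j _ => hab i j
  · exact Matrix.det_vandermonde_ne_zero_iff.2 ha
  · exact Matrix.det_vandermonde_ne_zero_iff.2 hb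

/-- `f` depends only on the multiset of entries of its argument. -/
def IsSymmetricFun {n : ℕ} (f : (Fin n → ℂ) → ℂ) : Prop :=
  ∀ w w', entries w = entries w' → f w = f w'

theorem IsHFamily.apply_of_entries_eq {ζ : ℂ} {H : (k : ℕ) → (Fin (2 * k) → ℂ) → ℂ}
    (hH : IsHFamily ζ H) {k : ℕ} (hsym : IsSymmetricFun (H k)) {w : Fin (2 * k) → ℂ}
    {a b : Fin k → ℂ} (hw : entries w = entries a + entries b) (h : HalvesRatioDefined ζ a b) :
    H k w = halvesRatio ζ a b := by
  rw [← hH.apply_joinHalves h]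
  exact hsym _ _ (by rw [hw, entries_joinHalves])

theorem halvesRatio_one (ζ : ℂ) {a b : Fin 1 → ℂ} (h : HalvesRatioDefined ζ a b) :
    halvesRatio ζ a b = 1 := by
  have := h.2.2 0 0
  simp [halvesRatio, vdm, this]

/-- The Plücker relation for `(x, y) ↦ H(a, b, x, y)`. -/
theorem IsHFamily.plucker {ζ : ℂ} {H : (k : ℕ) → (Fin (2 * k) → ℂ) → ℂ}
    (hH : IsHFamily ζ H) {m : ℕ} (hsym : IsSymmetricFun (H (m + 1))) {a b : Fin m → ℂ}
    {S : Set ℂ} (hS : ∀ x ∈ S, ∀ y ∈ S, hpol ζ x y ≠ 0)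
    (ha : Function.Injective a) (hb : Function.Injective b) (hab : ∀ i j, a i ≠ b j)
    (haS : ∀ i, a i ∈ S) (hbS : ∀ i, b i ∈ S) {x : Fin 4 → ℂ} (hx : Function.Injective x)
    (hxS : ∀ i, x i ∈ S) (hxb : ∀ i j, x i ≠ b j) (T : ℂ → ℂ → ℂ)
    (hT : ∀ x y, T x y = H (m + 1) (joinHalves (Fin.cons x a) (Fin.cons y b))) :
    (x 1 - x 0) * (x 3 - x 2) * T (x 0) (x 1) * T (x 2) (x 3)
      = (x 1 - x 2) * (x 3 - x 0) * T (x 2) (x 1) * T (x 0) (x 3)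
        + (x 2 - x 0) * (x 3 - x 1) * T (x 0) (x 2) * T (x 1) (x 3) := by
  cases m with
  | zero =>
    have h1 : ∀ i j, T (x i) (x j) = 1 := fun i j => by
      have hd : HalvesRatioDefined ζ (Fin.cons (x i) a : Fin 1 → ℂ)
          (Fin.cons (x j) b : Fin 1 → ℂ) := by
        have : Subsingleton (Fin (0 + 1)) := inferInstanceAs (Subsingleton (Fin 1))
        refine ⟨Function.injective_of_subsingleton _, Function.injective_of_subsingleton _,
          fun i' j' => ?_⟩
        rw [Subsingleton.elim i' 0, Subsingleton.elim j' 0]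
        exact hS _ (hxS i) _ (hxS j)
      rw [hT, hH.apply_joinHalves hd, halvesRatio_one ζ hd]
    simp only [h1]
    ring
  | succ m =>
    obtain ⟨b₀, b, rfl⟩ : ∃ b₀ b', b = Fin.cons b₀ b' := ⟨b 0, Fin.tail b, by simp⟩
    rw [Fin.cons_injective_iff] at hb
    have hT' : ∀ i j, i ≠ j → T (x i) (x j) = halvesRatio ζ (Fin.cons b₀ a)
        (Fin.cons (x i) (Fin.cons (x j) b : Fin (m + 1) → ℂ)) := fun i j hij => by
      rw [hT]
      refine hH.apply_of_entries_eq hsym ?_ ⟨?_, ?_, fun i' j' => hS _ ?_ _ ?_⟩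
      · simp only [entries_joinHalves, entries_cons]
        abel
      · refine Fin.cons_injective_iff.2 ⟨?_, ha⟩
        rintro ⟨i, hi⟩
        exact hab i 0 hi
      · refine Fin.cons_injective_iff.2 ⟨?_, Fin.cons_injective_iff.2 ⟨?_, hb.2⟩⟩
        · rintro ⟨l, hl⟩
          refine Fin.cases (fun hl => ?_) (fun l hl => ?_) l hl
          · exact hij (hx hl).symm
          · exact hxb i l.succ hl.symm
        · rintro ⟨l, hl⟩
          exact hxb j l.succ hl.symm
      · exact cons_mem (hbS 0) haS i'
      · exact cons_mem (hxS i) (cons_mem (hxS j) fun l => hbS l.succ) j'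
    rw [hT' 0 1 (by decide), hT' 2 3 (by decide), hT' 2 1 (by decide), hT' 0 3 (by decide),
      hT' 0 2 (by decide), hT' 1 3 (by decide)]
    exact halvesRatio_plucker ζ _ b (hx.ne (by decide)) (hx.ne (by decide)) (hx.ne (by decide))
      (hx.ne (by decide)) (hx.ne (by decide)) (hx.ne (by decide))

/-- `H` is unchanged when a variable of the first half and one of the second half are
exchanged, at generic points. -/
theorem IsHFamily.exchange {ζ : ℂ} {H : (k : ℕ) → (Fin (2 * k) → ℂ) → ℂ}
    (hH : IsHFamily ζ H) {m : ℕ} (hsym : IsSymmetricFun (H (m + 1))) {a b : Fin m → ℂ}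
    {S : Set ℂ} (hS : ∀ x ∈ S, ∀ y ∈ S, hpol ζ x y ≠ 0)
    (ha : Function.Injective a) (hb : Function.Injective b) (hab : ∀ i j, a i ≠ b j)
    (haS : ∀ i, a i ∈ S) (hbS : ∀ i, b i ∈ S) {x : Fin 4 → ℂ} (hx : Function.Injective x)
    (hxS : ∀ i, x i ∈ S) (hxa : ∀ i j, x i ≠ a j) (hxb : ∀ i j, x i ≠ b j)
    (h0 : H m (joinHalves a b) ≠ 0) :
    H (m + 2) (joinHalves (Fin.cons (x 0) (Fin.cons (x 2) a : Fin (m + 1) → ℂ))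
        (Fin.cons (x 1) (Fin.cons (x 3) b : Fin (m + 1) → ℂ)))
      = H (m + 2) (joinHalves (Fin.cons (x 0) (Fin.cons (x 1) a : Fin (m + 1) → ℂ))
        (Fin.cons (x 2) (Fin.cons (x 3) b : Fin (m + 1) → ℂ))) := by
  have cons_inj : ∀ (c : Fin m → ℂ), Function.Injective c → (∀ i j, x i ≠ c j) → ∀ i,
      Function.Injective (Fin.cons (x i) c : Fin (m + 1) → ℂ) := fun c hc hxc i => by
    refine Fin.cons_injective_iff.2 ⟨?_, hc⟩
    rintro ⟨l, hl⟩
    exact hxc i l hl.symm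
  have cons_cons_inj : ∀ (c : Fin m → ℂ), Function.Injective c → (∀ i j, x i ≠ c j) →
      ∀ i j, i ≠ j → Function.Injective
        (Fin.cons (x i) (Fin.cons (x j) c : Fin (m + 1) → ℂ) : Fin (m + 2) → ℂ) :=
    fun c hc hxc i j hij => by
    refine Fin.cons_injective_iff.2 ⟨?_, cons_inj c hc hxc j⟩
    rintro ⟨l, hl⟩
    refine Fin.cases (fun hl => ?_) (fun l hl => ?_) l hl
    · exact hij (hx hl).symm
    · exact hxc i l hl.symm
  have big : ∀ i j k l, i ≠ j → k ≠ l → H (m + 2) (joinHalves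
      (Fin.cons (x i) (Fin.cons (x j) a : Fin (m + 1) → ℂ))
      (Fin.cons (x k) (Fin.cons (x l) b : Fin (m + 1) → ℂ)))
      = halvesRatio ζ (Fin.cons (x i) (Fin.cons (x j) a : Fin (m + 1) → ℂ))
        (Fin.cons (x k) (Fin.cons (x l) b : Fin (m + 1) → ℂ)) := fun i j k l hij hkl =>
    hH.apply_joinHalves ⟨cons_cons_inj a ha hxa i j hij, cons_cons_inj b hb hxb k l hkl,
      fun i' j' => hS _ (cons_mem (hxS i) (cons_mem (hxS j) haS) i')
        _ (cons_mem (hxS k) (cons_mem (hxS l) hbS) j')⟩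
  let T : ℂ → ℂ → ℂ := fun x y => H (m + 1) (joinHalves (Fin.cons x a) (Fin.cons y b))
  have hT : ∀ i j, halvesRatio ζ (Fin.cons (x i) a : Fin (m + 1) → ℂ)
      (Fin.cons (x j) b : Fin (m + 1) → ℂ) = T (x i) (x j) := fun i j =>
    (hH.apply_joinHalves ⟨cons_inj a ha hxa i, cons_inj b hb hxb j,
      fun i' j' => hS _ (cons_mem (hxS i) haS i') _ (cons_mem (hxS j) hbS j')⟩).symm
  have hTsymm : ∀ i j, T i j = T j i := fun i j => hsym _ _ <| by
    simp only [entries_joinHalves, entries_cons]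
    abel
  have hab' : halvesRatio ζ a b = H m (joinHalves a b) :=
    (hH.apply_joinHalves ⟨ha, hb, fun i j => hS _ (haS i) _ (hbS j)⟩).symm
  have hp := hH.plucker hsym hS ha hb hab haS hbS hx hxS hxb T fun _ _ => rfl
  have d₁ := halvesRatio_desnanot_jacobi ζ a b (p := x 0) (q := x 1) (r := x 2) (s := x 3)
    (hx.ne (by decide)) (hx.ne (by decide))
  have d₂ := halvesRatio_desnanot_jacobi ζ a b (p := x 0) (q := x 2) (r := x 1) (s := x 3)
    (hx.ne (by decide)) (hx.ne (by decide))
  rw [big 0 2 1 3 (by decide) (by decide), big 0 1 2 3 (by decide) (by decide)]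
  simp only [hT, hab'] at d₁ d₂
  rw [hTsymm (x 2) (x 1)] at hp d₂
  have ne : ∀ i j, i ≠ j → x i - x j ≠ 0 := fun i j hij => sub_ne_zero.2 (hx.ne hij)
  have hne : (x 1 - x 0) * (x 3 - x 2) * ((x 2 - x 0) * (x 3 - x 1)) * H m (joinHalves a b) ≠ 0 :=
    mul_ne_zero (mul_ne_zero (mul_ne_zero (ne _ _ (by decide)) (ne _ _ (by decide)))
      (mul_ne_zero (ne _ _ (by decide)) (ne _ _ (by decide)))) h0
  refine mul_left_cancel₀ hne ?_
  rw [hpol_comm ζ (x 2) (x 1)] at d₂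
  have hh₁ : hpol ζ (x 0) (x 3) * hpol ζ (x 1) (x 2) - hpol ζ (x 0) (x 2) * hpol ζ (x 1) (x 3)
      = (x 1 - x 0) * (x 3 - x 2) * (3 + ζ ^ 2 - (1 - ζ ^ 2) * (x 0 + x 1 + x 2 + x 3)
        + (1 - ζ ^ 2) ^ 2 * (x 0 * x 1 * x 2 * x 3)) := by
    unfold hpol; ring
  have hh₂ : hpol ζ (x 0) (x 3) * hpol ζ (x 1) (x 2) - hpol ζ (x 0) (x 1) * hpol ζ (x 2) (x 3)
      = (x 2 - x 0) * (x 3 - x 1) * (3 + ζ ^ 2 - (1 - ζ ^ 2) * (x 0 + x 1 + x 2 + x 3)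
        + (1 - ζ ^ 2) ^ 2 * (x 0 * x 1 * x 2 * x 3)) := by
    unfold hpol; ring
  generalize 3 + ζ ^ 2 - (1 - ζ ^ 2) * (x 0 + x 1 + x 2 + x 3)
        + (1 - ζ ^ 2) ^ 2 * (x 0 * x 1 * x 2 * x 3) = s at hh₁ hh₂
  linear_combination (x 1 - x 0) * (x 3 - x 2) * d₂ - (x 2 - x 0) * (x 3 - x 1) * d₁
    + hpol ζ (x 0) (x 3) * hpol ζ (x 1) (x 2) * hp
    + (x 1 - x 0) * (x 3 - x 2) * T (x 0) (x 3) * T (x 1) (x 2) * hh₂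
    - (x 2 - x 0) * (x 3 - x 1) * T (x 0) (x 3) * T (x 1) (x 2) * hh₁

end Symmetry

section SymmetryOfH

variable {ζ : ℂ} {H : (k : ℕ) → (Fin (2 * k) → ℂ) → ℂ}

theorem IsHFamily.isPolyFun_joinHalves (hH : IsHFamily ζ H) {σ : Type*} {k : ℕ}
    (f g : Fin k → σ) : IsPolyFun fun z : σ → ℂ => H k (joinHalves (z ∘ f) (z ∘ g)) := by
  refine IsPolyFun.comp (hH.2.1 k) fun j => ?_
  simp only [joinHalves, Function.comp_apply]
  refine Fin.addCases (fun i => ?_) (fun i => ?_) (finCongr (two_mul k) j)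
  · simpa only [Fin.append_left, Function.comp_apply] using IsPolyFun.coord (f i)
  · simpa only [Fin.append_right, Function.comp_apply] using IsPolyFun.coord (g i)

theorem IsHFamily.generically_apply_joinHalves_ne_zero (hH : IsHFamily ζ H) {σ : Type*} {k : ℕ}
    {f g : Fin k → σ} (hfg : Function.Injective (Sum.elim f g)) :
    HoldsGenerically fun z : σ → ℂ => H k (joinHalves (z ∘ f) (z ∘ g)) ≠ 0 := by
  obtain ⟨a, b, hab⟩ := hH.exists_ne_zero k
  refine (hH.isPolyFun_joinHalves f g).generically_ne_zero
    (w₀ := Function.extend (Sum.elim f g) (Sum.elim a b) 0) ?_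
  convert hab using 3
  · funext i
    exact hfg.extend_apply (Sum.elim a b) 0 (.inl i)
  · funext i
    exact hfg.extend_apply (Sum.elim a b) 0 (.inr i)

/-- The permutations of the `2k` variables which leave `f` invariant. -/
def invariancePerms {k : ℕ} (f : (Fin (2 * k) → ℂ) → ℂ) :
    Subgroup (Equiv.Perm (Fin k ⊕ Fin k)) where
  carrier := {σ | ∀ z : Fin k ⊕ Fin k → ℂ, f (joinHalves ((z ∘ σ) ∘ Sum.inl) ((z ∘ σ) ∘ Sum.inr))
    = f (joinHalves (z ∘ Sum.inl) (z ∘ Sum.inr))}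
  mul_mem' {σ τ} hσ hτ z := (hτ (z ∘ σ)).trans (hσ z)
  one_mem' _ := rfl
  inv_mem' {σ} hσ z := by
    rw [← hσ (z ∘ ⇑σ⁻¹), Function.comp_assoc z, ← Equiv.Perm.coe_mul, inv_mul_cancel,
      Equiv.Perm.coe_one, Function.comp_id]

theorem mem_invariancePerms_of_generically (hH : IsHFamily ζ H) {k : ℕ}
    {σ : Equiv.Perm (Fin k ⊕ Fin k)}
    (h : HoldsGenerically fun z : Fin k ⊕ Fin k → ℂ =>
      H k (joinHalves (z ∘ σ ∘ Sum.inl) (z ∘ σ ∘ Sum.inr))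
        = H k (joinHalves (z ∘ Sum.inl) (z ∘ Sum.inr))) : σ ∈ invariancePerms (H k) :=
  IsPolyFun.eq_of_generically (hH.isPolyFun_joinHalves _ _) (hH.isPolyFun_joinHalves _ _) h

theorem IsHFamily.sumCongr_mem (hH : IsHFamily ζ H) {k : ℕ} (σ τ : Equiv.Perm (Fin k)) :
    Equiv.Perm.sumCongr σ τ ∈ invariancePerms (H k) := by
  refine mem_invariancePerms_of_generically hH ?_
  refine (generically_injective.and (generically_hpol_ne_zero ζ)).mono fun z ⟨hz, hpz⟩ => ?_
  have hd : ∀ σ τ : Equiv.Perm (Fin k),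
      HalvesRatioDefined ζ ((z ∘ Sum.inl) ∘ σ) ((z ∘ Sum.inr) ∘ τ) := fun σ τ =>
    ⟨(hz.comp Sum.inl_injective).comp σ.injective, (hz.comp Sum.inr_injective).comp τ.injective,
      fun _ _ => hpz _ _⟩
  exact (hH.apply_joinHalves (hd σ τ)).trans
    ((halvesRatio_comp_perm ζ _ _ σ τ).trans (hH.apply_joinHalves (hd 1 1)).symm)

theorem IsHFamily.swap_mem (hH : IsHFamily ζ H) {m : ℕ} (hsym : IsSymmetricFun (H (m + 1))) :
    Equiv.swap (Sum.inl 1) (Sum.inr 0) ∈ invariancePerms (k := m + 2) (H (m + 2)) := by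
  refine mem_invariancePerms_of_generically hH ?_
  let f : Fin m → Fin (m + 2) ⊕ Fin (m + 2) := fun i => .inl i.succ.succ
  let g : Fin m → Fin (m + 2) ⊕ Fin (m + 2) := fun i => .inr i.succ.succ
  let e : Fin 4 → Fin (m + 2) ⊕ Fin (m + 2) := ![.inl 0, .inl 1, .inr 0, .inr 1]
  have hf : Function.Injective f := fun i j => by simp [f]
  have hg : Function.Injective g := fun i j => by simp [g]
  have hfg : ∀ i j, f i ≠ g j := by simp [f, g]
  have he : Function.Injective e := by
    intro i j
    fin_cases i <;> fin_cases j <;> simp [e]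
  have hef : ∀ i j, e i ≠ f j := by
    intro i j
    fin_cases i <;> simp [e, f, Fin.ext_iff]
  have heg : ∀ i j, e i ≠ g j := by
    intro i j
    fin_cases i <;> simp [e, g, Fin.ext_iff]
  refine ((generically_injective.and (generically_hpol_ne_zero ζ)).and
    (hH.generically_apply_joinHalves_ne_zero (f := f) (g := g)
      (hf.sumElim hg hfg))).mono fun z ⟨⟨hz, hpz⟩, h0⟩ => ?_
  have key := hH.exchange hsym (a := z ∘ f) (b := z ∘ g) (S := Set.range z) (x := z ∘ e)
    (by rintro _ ⟨i, rfl⟩ _ ⟨j, rfl⟩; exact hpz i j) (hz.comp hf) (hz.comp hg)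
    (fun i j => hz.ne (hfg i j)) (fun i => ⟨_, rfl⟩) (fun i => ⟨_, rfl⟩) (hz.comp he)
    (fun i => ⟨_, rfl⟩) (fun i j => hz.ne (hef i j)) (fun i j => hz.ne (heg i j)) h0
  convert key using 3
  all_goals
    funext i
    refine Fin.cases ?_ (fun i => Fin.cases ?_ (fun i => ?_) i) i
  all_goals simp [e, f, g, Equiv.swap_apply_def, Fin.ext_iff]

theorem IsHFamily.invariancePerms_eq_top (hH : IsHFamily ζ H) {m : ℕ}
    (hsym : IsSymmetricFun (H (m + 1))) : invariancePerms (k := m + 2) (H (m + 2)) = ⊤ := by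
  have hmixed : ∀ i j, Equiv.swap (Sum.inl i) (Sum.inr j)
      ∈ invariancePerms (k := m + 2) (H (m + 2)) := fun i j => by
    have h := hH.sumCongr_mem (Equiv.swap 1 i : Equiv.Perm (Fin (m + 2))) (Equiv.swap 0 j)
    have h' := mul_mem (mul_mem h (hH.swap_mem hsym)) (inv_mem h)
    rw [← Equiv.swap_apply_apply] at h'
    simpa using h'
  rw [eq_top_iff, ← Equiv.Perm.closure_isSwap, Subgroup.closure_le]
  rintro _ ⟨i, j, -, rfl⟩
  rcases i with i | i <;> rcases j with j | j
  · rw [← Equiv.Perm.sumCongr_swap_one]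
    exact hH.sumCongr_mem _ _
  · exact hmixed i j
  · rw [Equiv.swap_comm]
    exact hmixed j i
  · rw [← Equiv.Perm.sumCongr_one_swap]
    exact hH.sumCongr_mem _ _

theorem isSymmetricFun_of_invariancePerms_eq_top {k : ℕ} {f : (Fin (2 * k) → ℂ) → ℂ}
    (h : invariancePerms f = ⊤) : IsSymmetricFun f := fun w w' hw => by
  rw [← joinHalves_halves w, ← joinHalves_halves w'] at hw ⊢
  rw [entries_joinHalves, entries_joinHalves, ← entries_sumElim, ← entries_sumElim] at hw
  obtain ⟨σ, hσ⟩ := exists_perm_of_entries_eq hw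
  have := (h ▸ Subgroup.mem_top σ : σ ∈ invariancePerms f)
    (Sum.elim (firstHalf w') (secondHalf w'))
  rwa [← hσ] at this

theorem IsHFamily.isSymmetricFun (hH : IsHFamily ζ H) (k : ℕ) : IsSymmetricFun (H k) := by
  cases k with
  | zero => exact fun w w' _ => (hH.1 w).trans (hH.1 w').symm
  | succ k =>
    induction k with
    | zero =>
      have h1 : ∀ w, H 1 w = 1 :=
        IsPolyFun.eq_of_generically (hH.2.1 1) (.const 1)
          ((generically_injective.and (generically_hpol_ne_zero ζ)).mono fun w ⟨_, hw⟩ => by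
            have hd : HalvesRatioDefined ζ (firstHalf (k := 1) w) (secondHalf (k := 1) w) :=
              ⟨Function.injective_of_subsingleton _, Function.injective_of_subsingleton _,
                fun _ _ => hw _ _⟩
            rw [← joinHalves_halves (k := 1) w, hH.apply_joinHalves hd, halvesRatio_one ζ hd])
      exact fun w w' _ => (h1 w).trans (h1 w').symm
    | succ m ih => exact isSymmetricFun_of_invariancePerms_eq_top (hH.invariancePerms_eq_top ih)

theorem IsPolyFun.apply_extL {σ : Type*} {m n : ℕ} {f : (Fin n → ℂ) → ℂ} (hf : IsPolyFun f)
    (c : Fin m → σ) (l : List σ) :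
    IsPolyFun fun z : σ → ℂ => f (extL (z ∘ c) (l.map z)) := by
  refine hf.comp fun j => ?_
  unfold extL
  split_ifs with h
  · exact .coord _
  · rcases lt_or_ge ((j : ℕ) - m) l.length with hl | hl
    · simpa [hl] using IsPolyFun.coord l[(j : ℕ) - m]
    · simpa [List.getElem?_eq_none hl] using IsPolyFun.const 0

end SymmetryOfH

theorem stmt4 (ζ : ℂ) (H : (k : ℕ) → (Fin (2*k) → ℂ) → ℂ) (hH : IsHFamily ζ H)
    (k : ℕ) (w : Fin (2*k+1) → ℂ) (x y u v : ℂ) :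
    (x - y) * hpol ζ u v * H (k+2) (extL w [x, y, v]) * H (k+1) (extL w [u])
      + (y - u) * hpol ζ x v * H (k+2) (extL w [y, u, v]) * H (k+1) (extL w [x])
      + (u - x) * hpol ζ y v * H (k+2) (extL w [u, x, v]) * H (k+1) (extL w [y]) = 0 := by
  let c : Fin (2 * k + 1) → Fin (2 * k + 1) ⊕ Fin 4 := Sum.inl
  let p : Fin 4 → Fin (2 * k + 1) ⊕ Fin 4 := Sum.inr
  have hterm : ∀ i j l : Fin 4, IsPolyFun fun z : Fin (2 * k + 1) ⊕ Fin 4 → ℂ =>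
      (z (p i) - z (p j)) * hpol ζ (z (p l)) (z (p 3))
        * H (k + 2) (extL (z ∘ c) [z (p i), z (p j), z (p 3)])
        * H (k + 1) (extL (z ∘ c) [z (p l)]) := fun i j l =>
    ((((IsPolyFun.coord _).sub (.coord _)).mul (.hpol ζ (.coord _) (.coord _))).mul
      (IsPolyFun.apply_extL (hH.2.1 (k + 2)) c [p i, p j, p 3])).mul
      (IsPolyFun.apply_extL (hH.2.1 (k + 1)) c [p l])
  refine (((hterm 0 1 2).add (hterm 1 2 0)).add (hterm 2 0 1)).eq_zero_of_generically ?_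
    (Sum.elim w ![x, y, u, v])
  refine (generically_injective.and (generically_hpol_ne_zero ζ)).mono fun z ⟨hz, hpz⟩ => ?_
  let q : Fin (k + 1) ⊕ Fin k ≃ Fin (2 * k + 1) :=
    finSumFinEquiv.trans (finCongr (by omega))
  let a : Fin (k + 1) → ℂ := fun i => z (c (q (.inl i)))
  let b : Fin k → ℂ := fun i => z (c (q (.inr i)))
  have hc : entries (z ∘ c) = entries a + entries b := by
    rw [← entries_comp_equiv _ q, ← entries_sumElim]
    congr 1
    funext i
    cases i <;> rfl
  have hS : ∀ s ∈ Set.range z, ∀ t ∈ Set.range z, hpol ζ s t ≠ 0 := by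
    rintro _ ⟨i, rfl⟩ _ ⟨j, rfl⟩
    exact hpz i j
  have hp : ∀ i, z (p i) ∈ Set.range z := fun i => ⟨_, rfl⟩
  have ha : Function.Injective a := fun i j h => by simpa [c] using hz h
  have hb : Function.Injective b := fun i j h => by simpa [c] using hz h
  have haS : ∀ i, a i ∈ Set.range z := fun i => ⟨_, rfl⟩
  have hbS : ∀ i, b i ∈ Set.range z := fun i => ⟨_, rfl⟩
  have hpa : ∀ i, z (p i) ∉ Set.range a := by
    rintro i ⟨j, hj⟩
    exact Sum.inl_ne_inr (hz hj)
  have hpb : ∀ i, z (p i) ∉ Set.range b := by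
    rintro i ⟨j, hj⟩
    exact Sum.inl_ne_inr (hz hj)
  have hb1 : ∀ i, Function.Injective (Fin.cons (z (p i)) b : Fin (k + 1) → ℂ) := fun i =>
    Fin.cons_injective_iff.2 ⟨hpb i, hb⟩
  have hne : ∀ i j, i ≠ j → z (p i) ≠ z (p j) := fun i j hij =>
    hz.ne fun h => hij (Sum.inr_injective h)
  have h1 : ∀ i, H (k + 1) (extL (z ∘ c) [z (p i)])
      = halvesRatio ζ a (Fin.cons (z (p i)) b : Fin (k + 1) → ℂ) := fun i => by
    refine hH.apply_of_entries_eq (hH.isSymmetricFun _) ?_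
      ⟨ha, hb1 i, fun i' j' => hS _ (haS i') _ (cons_mem (hp i) hbS j')⟩
    rw [entries_extL _ _ (by simp; omega), hc, entries_cons, Multiset.coe_singleton]
    abel
  have h2 : ∀ i j, i ≠ j → H (k + 2) (extL (z ∘ c) [z (p i), z (p j), z (p 3)])
      = halvesRatio ζ (Fin.cons (z (p 3)) a : Fin (k + 2) → ℂ)
        (Fin.cons (z (p i)) (Fin.cons (z (p j)) b : Fin (k + 1) → ℂ)) := fun i j hij => by
    refine hH.apply_of_entries_eq (hH.isSymmetricFun _) ?_
      ⟨Fin.cons_injective_iff.2 ⟨hpa 3, ha⟩, Fin.cons_injective_iff.2 ⟨?_, hb1 j⟩,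
        fun i' j' => hS _ (cons_mem (hp 3) haS i') _ (cons_mem (hp i) (cons_mem (hp j) hbS) j')⟩
    · rw [entries_extL _ _ (by simp; omega), hc, entries_cons, entries_cons, entries_cons,
        ← Multiset.cons_coe, ← Multiset.cons_coe, Multiset.coe_singleton,
        ← Multiset.singleton_add, ← Multiset.singleton_add]
      abel
    · rw [Fin.range_cons]
      rintro (h | h)
      · exact hne i j hij h
      · exact hpb i h
  simp only [h1]
  rw [h2 0 1 (by decide), h2 1 2 (by decide), h2 2 0 (by decide)]
  exact halvesRatio_bilinear ζ a b _ (hne _ _ (by decide)) (hne _ _ (by decide))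
    (hne _ _ (by decide))

end
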